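/- Lower bound on Dirichlet boundary-crossing probabilities: Let m ≥ 1, b > 0, and let f : {0,…,m} → [0,b] satisfy f(0) = 0 and f(m) = b. Let α = (α_0,…,α_m) ∈ ℝ_{>0}^{m+1}, set ᾱ = Σ_{j=0}^m α_j and p̄(ℓ) = α_ℓ/ᾱ for ℓ = 0,…,m. Fix ε ∈ (0,1) and assume min(α_0, α_m) ≥ c₀·ε^{−2}. Define α⁺ = (α_0, α_1, …, α_{m−1}, α_m + 1). Then for every μ ∈ (p̄f, b), P_{w ∼ Dir(α⁺)}( wf ≥ μ ) ≥ (1 − ε) · P_{ζ ∼ N(0,1)}( ζ ≥ √(2 ᾱ Kinf(p̄, μ, f)) ). -/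

import Mathlib

open MeasureTheory ProbabilityTheory Real Set
open scoped ENNReal

noncomputable section

/-- The absolute constant `c₀ = (2/π)(8 + 49√6/9)²`. -/
def c0 : ℝ := (2 / Real.pi) * (8 + 49 * Real.sqrt 6 / 9) ^ 2

/-- Unnormalized density of `Dir(α)` in the first `m` coordinates. -/
def dirichletDensity (m : ℕ) (α : Fin (m + 1) → ℝ) : (Fin m → ℝ) → ℝ :=
  Set.indicator {x | (∀ i, 0 ≤ x i) ∧ ∑ i, x i ≤ 1}
    (fun x => (∏ i : Fin m, x i ^ (α i.castSucc - 1)) * (1 - ∑ i, x i) ^ (α (Fin.last m) - 1))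

def dirichletBase (m : ℕ) (α : Fin (m + 1) → ℝ) : Measure (Fin m → ℝ) :=
  volume.withDensity fun x => ENNReal.ofReal (dirichletDensity m α x)

/-- The Dirichlet distribution `Dir(α)`, as the law of the vector
`(x₀, …, x_{m-1}, 1 - ∑ x_i)` on the simplex `Δ_m ⊆ ℝ^{m+1}`. -/
def dirichlet (m : ℕ) (α : Fin (m + 1) → ℝ) : Measure (Fin (m + 1) → ℝ) :=
  Measure.map (fun x : Fin m → ℝ => Fin.snoc x (1 - ∑ i, x i))
    ((dirichletBase m α Set.univ)⁻¹ • dirichletBase m α)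

/-- Kullback–Leibler divergence between finitely supported `p, q` (for `p ≪ q`). -/
def klReal {m : ℕ} (p q : Fin (m + 1) → ℝ) : ℝ :=
  ∑ i, if p i = 0 then 0 else p i * Real.log (p i / q i)

/-- `Kinf(p, μ, f) = inf { KL(p,q) : q ∈ Δ_m, qf ≥ μ }`. -/
def Kinf {m : ℕ} (p : Fin (m + 1) → ℝ) (μ : ℝ) (f : Fin (m + 1) → ℝ) : ℝ :=
  sInf {x | ∃ q ∈ stdSimplex ℝ (Fin (m + 1)),
    (∀ i, q i = 0 → p i = 0) ∧ μ ≤ ∑ i, f i * q i ∧ x = klReal p q}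

/-- `Kinf*(p, μ, f) = inf { KL(p,q) : q ∈ Δ_m, qf = μ }`. -/
def Kinfstar {m : ℕ} (p : Fin (m + 1) → ℝ) (μ : ℝ) (f : Fin (m + 1) → ℝ) : ℝ :=
  sInf {x | ∃ q ∈ stdSimplex ℝ (Fin (m + 1)),
    (∀ i, q i = 0 → p i = 0) ∧ (∑ i, f i * q i) = μ ∧ x = klReal p q}

/-- `A(p, μ, f) = sgn(μ - pf) √(2 Kinf*(p, μ, f))`. -/
def Afun {m : ℕ} (p : Fin (m + 1) → ℝ) (μ : ℝ) (f : Fin (m + 1) → ℝ) : ℝ :=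
  Real.sign (μ - ∑ ℓ, f ℓ * p ℓ) * Real.sqrt (2 * Kinfstar p μ f)

/-!
A `Dir(β)` vector is a vector of independent `Gamma(β j, 1)` variables `Y j` divided by its sum, so
the event `μ ≤ ∑ j, f j * w j` is `0 ≤ ∑ j, (f j - μ) * Y j`. Tilting the `Y j` exponentially by the
optimal dual multiplier of `Kinf` centres this sum, and rewrites the probability as
`exp (-ᾱ * Kinf)` times the expectation of `exp (-V) * 1_{0 ≤ V}` for a sum `V` of rescaled Gamma
variables. The extra unit of mass on the last atom contributes an independent exponential variable
to `V`; integrating it out replaces the discontinuous integrand by a continuous two-sided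
exponential, whose Fourier transform is integrable. By Parseval's formula it then suffices to
compare the characteristic function of the remaining sum with that of a centred Gaussian of the same
variance, and since the two extreme atoms have mass of order `ε⁻²`, the relative error is at most
`ε`. The Gaussian expectation is a sum of two Mills ratios, which together dominate the Gaussian
tail.
-/

/-! ### Product measures -/

section PiMeasure

variable {ι : Type*} {E : ι → Type*} [∀ i, MeasurableSpace (E i)]
  {ν : ∀ i, Measure (E i)} [∀ i, SigmaFinite (ν i)] {g : ∀ i, E i → ℝ≥0∞}

lemma lmarginal_const_mul_prod [DecidableEq ι] (hg : ∀ i, Measurable (g i)) (s : Finset ι)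
    (c : ℝ≥0∞) :
    ∫⋯∫⁻_s, (fun y => c * ∏ i ∈ s, g i (y i)) ∂ν = fun _ => c * ∏ i ∈ s, ∫⁻ t, g i t ∂ν i := by
  induction s using Finset.induction_on generalizing c with
  | empty => simp
  | insert i s hi ih =>
    have inner (y : ∀ j, E j) :
        ∫⁻ t, c * ∏ j ∈ insert i s, g j (Function.update y i t j) ∂ν i
          = (c * ∫⁻ t, g i t ∂ν i) * ∏ j ∈ s, g j (y j) := by
      rw [← lintegral_const_mul _ (hg i), ← lintegral_mul_const _ ((hg i).const_mul c)]
      refine lintegral_congr fun t => ?_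
      rw [Finset.prod_insert hi, Function.update_self, mul_assoc]
      congr 2
      refine Finset.prod_congr rfl fun j hj => ?_
      rw [Function.update_of_ne (ne_of_mem_of_not_mem hj hi)]
    rw [lmarginal_insert' _ (by fun_prop) hi, funext inner, ih, Finset.prod_insert hi]
    simp only [mul_assoc]

variable [Fintype ι]

lemma lintegral_pi_prod (hg : ∀ i, Measurable (g i)) :
    ∫⁻ y, ∏ i, g i (y i) ∂Measure.pi ν = ∏ i, ∫⁻ t, g i t ∂ν i := by
  classical
  cases isEmpty_or_nonempty (∀ i, E i) with
  | inl h =>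
    obtain ⟨i, hi⟩ : ∃ i, IsEmpty (E i) := by simpa [Classical.nonempty_pi] using h
    rw [lintegral_of_isEmpty, Finset.prod_eq_zero (Finset.mem_univ i) (lintegral_of_isEmpty _ _)]
  | inr h =>
    simpa only [one_mul, lintegral_eq_lmarginal_univ h.some] using
      congrFun (lmarginal_const_mul_prod hg Finset.univ 1) h.some

lemma pi_withDensity (hg : ∀ i, Measurable (g i)) [∀ i, SigmaFinite ((ν i).withDensity (g i))] :
    Measure.pi (fun i => (ν i).withDensity (g i))
      = (Measure.pi ν).withDensity fun y => ∏ i, g i (y i) := by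
  refine Measure.pi_eq fun s hs => ?_
  have prod_indicator (y : ∀ i, E i) :
      (univ.pi s).indicator (fun y => ∏ i, g i (y i)) y = ∏ i, (s i).indicator (g i) (y i) := by
    by_cases hy : ∀ i, y i ∈ s i
    · rw [indicator_of_mem (show y ∈ univ.pi s from fun i _ => hy i)]
      exact Finset.prod_congr rfl fun i _ => (indicator_of_mem (hy i) _).symm
    · obtain ⟨i, hi⟩ := not_forall.mp hy
      rw [indicator_of_notMem (show y ∉ univ.pi s from fun h => hi (h i trivial))]
      exact (Finset.prod_eq_zero (Finset.mem_univ i) (indicator_of_notMem hi _)).symm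
  rw [withDensity_apply _ (.univ_pi hs), ← lintegral_indicator (.univ_pi hs),
    lintegral_congr prod_indicator, lintegral_pi_prod fun i => (hg i).indicator (hs i)]
  refine Finset.prod_congr rfl fun i _ => ?_
  rw [lintegral_indicator (hs i), withDensity_apply _ (hs i)]

end PiMeasure

/-! ### Dirichlet distributions and independent Gamma variables -/

lemma lintegral_eq_pow_finrank_mul_lintegral_smul {E : Type*} [NormedAddCommGroup E]
    [NormedSpace ℝ E] [FiniteDimensional ℝ E] [MeasurableSpace E] [BorelSpace E] (ν : Measure E)
    [ν.IsAddHaarMeasure] (F : E → ℝ≥0∞) {s : ℝ} (hs : 0 < s) :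
    ∫⁻ x, F x ∂ν = ENNReal.ofReal (s ^ Module.finrank ℝ E) * ∫⁻ x, F (s • x) ∂ν := by
  have comp_smul : ∫⁻ x, F (s • x) ∂ν = ∫⁻ x, F x ∂ν.map (s • ·) :=
    ((Homeomorph.smulOfNeZero s hs.ne').measurableEmbedding.lintegral_map F).symm
  rw [comp_smul, Measure.map_addHaar_smul ν hs.ne', lintegral_smul_measure, smul_eq_mul,
    ← mul_assoc, ← ENNReal.ofReal_mul (by positivity), abs_of_pos (by positivity),
    mul_inv_cancel₀ (by positivity), ENNReal.ofReal_one, one_mul]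

section Simplex

variable {m : ℕ} {β : Fin (m + 1) → ℝ}

/-- The point of the hyperplane `∑ j, w j = 1` with first `m` coordinates `x`; `dirichlet m β` is
the image under this map of a measure on `Fin m → ℝ`. -/
def simplexPoint (x : Fin m → ℝ) : Fin (m + 1) → ℝ := Fin.snoc x (1 - ∑ i, x i)

lemma measurable_finSnoc {X : Type*} [MeasurableSpace X] {u : X → Fin m → ℝ} {v : X → ℝ}
    (hu : Measurable u) (hv : Measurable v) :
    Measurable fun p => (Fin.snoc (u p) (v p) : Fin (m + 1) → ℝ) := by
  refine measurable_pi_lambda _ fun j => ?_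
  cases j using Fin.lastCases with
  | last => simpa only [Fin.snoc_last] using hv
  | cast i => simpa only [Fin.snoc_castSucc] using hu.eval (a := i)

lemma measurable_simplexPoint : Measurable (simplexPoint (m := m)) :=
  measurable_finSnoc measurable_id (by fun_prop)

lemma dirichlet_eq_map_simplexPoint :
    dirichlet m β = ((dirichletBase m β univ)⁻¹ • dirichletBase m β).map simplexPoint :=
  rfl

lemma sum_finSnoc_sub (x : Fin m → ℝ) (s : ℝ) :
    ∑ j, (Fin.snoc x (s - ∑ i, x i) : Fin (m + 1) → ℝ) j = s := by
  simp [Fin.sum_univ_castSucc]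

lemma sum_simplexPoint (x : Fin m → ℝ) : ∑ j, simplexPoint x j = 1 :=
  sum_finSnoc_sub x 1

lemma smul_simplexPoint (s : ℝ) (x : Fin m → ℝ) :
    s • simplexPoint x = Fin.snoc (s • x) (s - ∑ i, (s • x) i) := by
  funext j
  cases j using Fin.lastCases with
  | last => simp [simplexPoint, ← Finset.mul_sum, mul_sub]
  | cast i => simp [simplexPoint]

lemma normalize_smul_simplexPoint {s : ℝ} (hs : s ≠ 0) (x : Fin m → ℝ) :
    (∑ j, (s • simplexPoint x) j)⁻¹ • s • simplexPoint x = simplexPoint x := by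
  simp only [Pi.smul_apply, smul_eq_mul, ← Finset.mul_sum, sum_simplexPoint, mul_one,
    inv_smul_smul₀ hs]

lemma simplexPoint_nonneg_iff {x : Fin m → ℝ} :
    (∀ j, 0 ≤ simplexPoint x j) ↔ (∀ i, 0 ≤ x i) ∧ ∑ i, x i ≤ 1 := by
  simp [Fin.forall_fin_succ', simplexPoint]

open Classical in
lemma dirichletDensity_eq_ite (x : Fin m → ℝ) :
    dirichletDensity m β x =
      if ∀ j, 0 ≤ simplexPoint x j then ∏ j, simplexPoint x j ^ (β j - 1) else 0 := by
  simp only [simplexPoint_nonneg_iff, dirichletDensity, indicator_apply, mem_ofPred_eq]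
  simp only [Fin.prod_univ_castSucc, simplexPoint, Fin.snoc_castSucc, Fin.snoc_last]

lemma measurable_dirichletDensity : Measurable (dirichletDensity m β) := by
  have meas : MeasurableSet {x : Fin m → ℝ | (∀ i, 0 ≤ x i) ∧ ∑ i, x i ≤ 1} := by measurability
  exact Measurable.indicator (by fun_prop) meas

lemma lintegral_finSnoc_sub {G : (Fin (m + 1) → ℝ) → ℝ≥0∞} (hG : Measurable G) :
    ∫⁻ y, G y = ∫⁻ s : ℝ, ∫⁻ x : Fin m → ℝ, G (Fin.snoc x (s - ∑ i, x i)) := by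
  have splitLast := (volume_preserving_piFinSuccAbove (fun _ : Fin (m + 1) => ℝ) (Fin.last m)).symm
  have toSnoc (p : ℝ × (Fin m → ℝ)) :
      G ((MeasurableEquiv.piFinSuccAbove (fun _ => ℝ) (Fin.last m)).symm p)
        = G (Fin.snoc p.2 p.1) := congrArg G (Fin.insertNth_last' p.1 p.2)
  rw [← splitLast.lintegral_comp_emb (MeasurableEquiv.measurableEmbedding _),
    lintegral_congr toSnoc, Measure.volume_eq_prod,
    lintegral_prod_symm' (fun p : ℝ × (Fin m → ℝ) => G (Fin.snoc p.2 p.1))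
      (hG.comp (measurable_finSnoc measurable_snd measurable_fst))]
  calc ∫⁻ x : Fin m → ℝ, ∫⁻ t : ℝ, G (Fin.snoc x t)
      = ∫⁻ x : Fin m → ℝ, ∫⁻ s : ℝ, G (Fin.snoc x (s - ∑ i, x i)) :=
        lintegral_congr fun x =>
          (lintegral_sub_right_eq_self (fun t => G (Fin.snoc x t)) (∑ i, x i)).symm
    _ = _ := lintegral_lintegral_swap
        (hG.comp (measurable_finSnoc measurable_fst (by fun_prop))).aemeasurable

lemma lintegral_sum_pos_eq {G : (Fin (m + 1) → ℝ) → ℝ≥0∞} (hG : Measurable G) :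
    ∫⁻ y in {y | 0 < ∑ j, y j}, G y
      = ∫⁻ s in Ioi (0 : ℝ), ENNReal.ofReal (s ^ m) * ∫⁻ x, G (s • simplexPoint x) := by
  have meas : MeasurableSet {y : Fin (m + 1) → ℝ | 0 < ∑ j, y j} :=
    measurableSet_lt measurable_const (by fun_prop)
  rw [← lintegral_indicator meas, lintegral_finSnoc_sub (hG.indicator meas),
    ← lintegral_indicator measurableSet_Ioi]
  refine lintegral_congr fun s => ?_
  by_cases hs : 0 < s
  · rw [indicator_of_mem (mem_Ioi.mpr hs),
      lintegral_eq_pow_finrank_mul_lintegral_smul volume _ hs, Module.finrank_fin_fun]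
    congr 1
    refine lintegral_congr fun x => ?_
    rw [indicator_of_mem (by simpa only [mem_ofPred_eq, sum_finSnoc_sub] using hs),
      smul_simplexPoint]
  · rw [indicator_of_notMem (by simpa using hs),
      ← lintegral_zero (μ := (volume : Measure (Fin m → ℝ)))]
    refine lintegral_congr fun x => indicator_of_notMem ?_ _
    simpa only [mem_ofPred_eq, sum_finSnoc_sub] using hs

end Simplex

section DirichletGamma

variable {m : ℕ} {β : Fin (m + 1) → ℝ}

lemma prod_gammaPDFReal_smul_simplexPoint {s : ℝ} (hs : 0 < s) (x : Fin m → ℝ) :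
    ∏ j, gammaPDFReal (β j) 1 ((s • simplexPoint x) j)
      = s ^ (∑ j, (β j - 1)) * exp (-s) * (∏ j, Gamma (β j))⁻¹ * dirichletDensity m β x := by
  rw [dirichletDensity_eq_ite]
  split_ifs with hx
  · have factor (j : Fin (m + 1)) : gammaPDFReal (β j) 1 ((s • simplexPoint x) j)
        = s ^ (β j - 1) * exp (-(s * simplexPoint x j)) * (Gamma (β j))⁻¹
          * simplexPoint x j ^ (β j - 1) := by
      rw [Pi.smul_apply, smul_eq_mul, gammaPDFReal, if_pos (mul_nonneg hs.le (hx j)), one_rpow,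
        mul_rpow hs.le (hx j), one_mul]
      ring
    simp only [factor, Finset.prod_mul_distrib, Finset.prod_inv_distrib, rpow_sum_of_pos hs,
      ← exp_sum, Finset.sum_neg_distrib, ← Finset.mul_sum, sum_simplexPoint, mul_one]
  · obtain ⟨j, hj⟩ := not_forall.mp hx
    rw [mul_zero, Finset.prod_eq_zero (Finset.mem_univ j)]
    rw [gammaPDFReal, if_neg]
    simpa [hs] using hj

lemma prod_gammaPDF_smul_simplexPoint (hβ : ∀ j, 0 < β j) {s : ℝ} (hs : 0 < s) (x : Fin m → ℝ) :
    ∏ j, gammaPDF (β j) 1 ((s • simplexPoint x) j)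
      = ENNReal.ofReal (s ^ (∑ j, (β j - 1)) * exp (-s) * (∏ j, Gamma (β j))⁻¹)
        * ENNReal.ofReal (dirichletDensity m β x) := by
  have Gamma_pos : 0 < ∏ j, Gamma (β j) := Finset.prod_pos fun j _ => Gamma_pos_of_pos (hβ j)
  rw [← ENNReal.ofReal_mul (by positivity), ← prod_gammaPDFReal_smul_simplexPoint hs,
    ENNReal.ofReal_prod_of_nonneg fun j _ => gammaPDFReal_nonneg (hβ j) one_pos _]
  rfl

lemma measurable_gammaPDF (a r : ℝ) : Measurable (gammaPDF a r) :=
  (measurable_gammaPDFReal a r).ennreal_ofReal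

lemma gammaMeasure_ae_pos (a r : ℝ) : ∀ᵐ t ∂gammaMeasure a r, 0 < t := by
  have compl_eq : {t : ℝ | 0 < t}ᶜ = Iic 0 := compl_Ioi
  rw [ae_iff, ← compl_ofPred, compl_eq, gammaMeasure, withDensity_apply _ measurableSet_Iic,
    setLIntegral_congr Iio_ae_eq_Iic.symm, lintegral_gammaPDF_of_nonpos le_rfl]

lemma pi_gammaMeasure_ae_pos {ι : Type*} [Fintype ι] {β r : ι → ℝ}
    [∀ i, SigmaFinite (gammaMeasure (β i) (r i))] :
    ∀ᵐ y ∂Measure.pi fun i => gammaMeasure (β i) (r i), ∀ i, 0 < y i :=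
  eventually_countable_forall.mpr fun i =>
    (Measure.quasiMeasurePreserving_eval _ i).ae (gammaMeasure_ae_pos _ _)

lemma pi_gammaMeasure_eq_withDensity {ι : Type*} [Fintype ι] {β r : ι → ℝ}
    [∀ i, SigmaFinite (gammaMeasure (β i) (r i))] :
    Measure.pi (fun i => gammaMeasure (β i) (r i))
      = volume.withDensity fun y => ∏ i, gammaPDF (β i) (r i) (y i) :=
  have (i : ι) : SigmaFinite (volume.withDensity (gammaPDF (β i) (r i))) :=
    inferInstanceAs (SigmaFinite (gammaMeasure (β i) (r i)))
  pi_withDensity fun _ => measurable_gammaPDF _ _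

lemma lintegral_pi_gammaMeasure_normalize (hβ : ∀ j, 0 < β j) {H : (Fin (m + 1) → ℝ) → ℝ≥0∞}
    (hH : Measurable H) :
    ∫⁻ y, H ((∑ j, y j)⁻¹ • y) ∂Measure.pi (fun j => gammaMeasure (β j) 1)
      = (∫⁻ s in Ioi (0 : ℝ), ENNReal.ofReal (s ^ m) *
          ENNReal.ofReal (s ^ (∑ j, (β j - 1)) * exp (-s) * (∏ j, Gamma (β j))⁻¹))
        * ∫⁻ x, H (simplexPoint x) ∂dirichletBase m β := by
  have (j : Fin (m + 1)) := isProbabilityMeasure_gammaMeasure (hβ j) one_pos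
  have density_meas : Measurable fun y : Fin (m + 1) → ℝ => ∏ j, gammaPDF (β j) 1 (y j) :=
    Finset.measurable_prod _ fun j _ => (measurable_gammaPDF _ _).comp (measurable_pi_apply j)
  have sum_pos : ∀ᵐ y ∂Measure.pi fun j => gammaMeasure (β j) 1, y ∈ {y | 0 < ∑ j, y j} :=
    pi_gammaMeasure_ae_pos.mono fun y hy => Finset.sum_pos (fun j _ => hy j) Finset.univ_nonempty
  have sum_pos_meas : MeasurableSet {y : Fin (m + 1) → ℝ | 0 < ∑ j, y j} :=
    measurableSet_lt measurable_const (by fun_prop)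
  have normalize_meas : Measurable fun y : Fin (m + 1) → ℝ => H ((∑ j, y j)⁻¹ • y) :=
    hH.comp (by fun_prop)
  rw [← Measure.restrict_eq_self_of_ae_mem sum_pos, pi_gammaMeasure_eq_withDensity,
    restrict_withDensity sum_pos_meas, lintegral_withDensity_eq_lintegral_mul _ density_meas
      normalize_meas, lintegral_sum_pos_eq (density_meas.mul normalize_meas),
    ← lintegral_mul_const _ (by fun_prop)]
  refine setLIntegral_congr_fun measurableSet_Ioi fun s (hs : 0 < s) => ?_
  have dd_meas : Measurable fun x => ENNReal.ofReal (dirichletDensity m β x) :=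
    measurable_dirichletDensity.ennreal_ofReal
  have H_meas : Measurable fun x : Fin m → ℝ => H (simplexPoint x) :=
    hH.comp measurable_simplexPoint
  rw [dirichletBase, lintegral_withDensity_eq_lintegral_mul _ dd_meas H_meas, mul_assoc,
    ← lintegral_const_mul _ (dd_meas.mul H_meas)]
  simp only [Pi.mul_apply, prod_gammaPDF_smul_simplexPoint hβ hs, mul_assoc,
    normalize_smul_simplexPoint hs.ne']

lemma dirichlet_eq_map_pi_gammaMeasure (hβ : ∀ j, 0 < β j) :
    dirichlet m β
      = (Measure.pi fun j => gammaMeasure (β j) 1).map (fun y => (∑ j, y j)⁻¹ • y) := by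
  have (j : Fin (m + 1)) := isProbabilityMeasure_gammaMeasure (hβ j) one_pos
  have normalize_meas : Measurable fun y : Fin (m + 1) → ℝ => (∑ j, y j)⁻¹ • y := by fun_prop
  have total_mass := lintegral_pi_gammaMeasure_normalize hβ (measurable_const (a := (1 : ℝ≥0∞)))
  simp only [lintegral_one, measure_univ] at total_mass
  refine Measure.ext_of_lintegral _ fun H hH => ?_
  rw [lintegral_map hH normalize_meas, lintegral_pi_gammaMeasure_normalize hβ hH,
    ENNReal.eq_inv_of_mul_eq_one_left total_mass.symm, dirichlet_eq_map_simplexPoint,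
    lintegral_map hH measurable_simplexPoint, lintegral_smul_measure, smul_eq_mul]

lemma dirichlet_le_sum_eq (hβ : ∀ j, 0 < β j) (f : Fin (m + 1) → ℝ) (μ : ℝ) :
    dirichlet m β {w | μ ≤ ∑ j, f j * w j}
      = Measure.pi (fun j => gammaMeasure (β j) 1) {y | 0 ≤ ∑ j, (f j - μ) * y j} := by
  have (j : Fin (m + 1)) := isProbabilityMeasure_gammaMeasure (hβ j) one_pos
  rw [dirichlet_eq_map_pi_gammaMeasure hβ, Measure.map_apply (by fun_prop)
    (measurableSet_le measurable_const (by fun_prop))]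
  refine measure_congr (Filter.eventuallyEq_set.mpr (pi_gammaMeasure_ae_pos.mono fun y hy => ?_))
  have sum_pos : 0 < ∑ j, y j := Finset.sum_pos (fun j _ => hy j) Finset.univ_nonempty
  have pull_out : ∑ j, f j * ((∑ i, y i)⁻¹ • y) j = (∑ j, f j * y j) / ∑ i, y i := by
    rw [Finset.sum_div]
    exact Finset.sum_congr rfl fun j _ => by simp only [Pi.smul_apply, smul_eq_mul]; ring
  rw [mem_preimage, mem_ofPred_eq, mem_ofPred_eq, pull_out, le_div_iff₀ sum_pos]
  simp only [sub_mul, Finset.sum_sub_distrib, ← Finset.mul_sum, sub_nonneg]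

end DirichletGamma

/-! ### Weighted sums of Gamma variables -/

lemma map_mul_gammaMeasure (a : ℝ) {r : ℝ} (hr : 0 < r) :
    (gammaMeasure a r).map (fun t => r * t) = gammaMeasure a 1 := by
  have pdf_scale (t : ℝ) : gammaPDF a r t = ENNReal.ofReal r * gammaPDF a 1 (r • t) := by
    rw [smul_eq_mul, gammaPDF, gammaPDF, ← ENNReal.ofReal_mul hr.le, gammaPDFReal, gammaPDFReal]
    by_cases ht : 0 ≤ t
    · rw [if_pos ht, if_pos (by positivity), mul_rpow hr.le ht, rpow_sub_one hr.ne', one_rpow,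
        one_mul]
      field_simp
    · rw [if_neg ht, if_neg (by simpa [hr] using ht), mul_zero]
  refine Measure.ext_of_lintegral _ fun F hF => ?_
  have scale := lintegral_eq_pow_finrank_mul_lintegral_smul volume
    (fun t => gammaPDF a 1 t * F t) hr
  rw [Module.finrank_self, pow_one,
    ← lintegral_const_mul' _ _ ENNReal.ofReal_ne_top] at scale
  rw [lintegral_map hF (measurable_const_mul r), gammaMeasure, gammaMeasure,
    lintegral_withDensity_eq_lintegral_mul _ (measurable_gammaPDF a r)
      (show Measurable fun t => F (r * t) by fun_prop),
    lintegral_withDensity_eq_lintegral_mul _ (measurable_gammaPDF a 1) hF]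
  simp only [Pi.mul_apply, scale, pdf_scale, smul_eq_mul, mul_assoc]

lemma gammaMeasure_eq_withDensity_exp (a : ℝ) {r : ℝ} (hr : 0 < r) :
    gammaMeasure a r
      = (gammaMeasure a 1).withDensity fun t => ENNReal.ofReal (r ^ a * exp (-((r - 1) * t))) := by
  rw [gammaMeasure, gammaMeasure,
    ← withDensity_mul _ (measurable_gammaPDF a 1) (by fun_prop)]
  congr 1
  funext t
  rw [Pi.mul_apply, gammaPDF, gammaPDF, mul_comm, ← ENNReal.ofReal_mul (by positivity)]
  congr 1
  rw [gammaPDFReal, gammaPDFReal]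
  split_ifs
  · rw [one_rpow, one_mul, show -(r * t) = -((r - 1) * t) + -t by ring, exp_add]
    ring
  · rw [mul_zero]

lemma mgf_gammaMeasure {a u : ℝ} (ha : 0 < a) (hu : u < 1) :
    mgf id (gammaMeasure a 1) u = (1 - u) ^ (-a) := by
  have integrand_eq (t : ℝ) : (gammaPDF a 1 t).toReal • exp (u * id t)
      = (Ici 0).indicator (fun t => (Gamma a)⁻¹ * (t ^ (a - 1) * exp (-((1 - u) * t)))) t := by
    rw [gammaPDF, ENNReal.toReal_ofReal (gammaPDFReal_nonneg ha one_pos t), gammaPDFReal]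
    by_cases ht : 0 ≤ t
    · rw [if_pos ht, indicator_of_mem (mem_Ici.mpr ht), one_rpow, smul_eq_mul, id,
        show -((1 - u) * t) = -(1 * t) + u * t by ring, exp_add]
      ring
    · rw [if_neg ht, indicator_of_notMem (notMem_Ici.mpr (not_le.mp ht)), zero_smul]
  rw [mgf, gammaMeasure, integral_withDensity_eq_integral_toReal_smul (measurable_gammaPDF a 1)
      (ae_of_all _ fun _ => ENNReal.ofReal_lt_top)]
  simp only [integrand_eq]
  rw [integral_indicator measurableSet_Ici, integral_Ici_eq_integral_Ioi, integral_const_mul,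
    integral_rpow_mul_exp_neg_mul_Ioi ha (by linarith), one_div, inv_rpow (by linarith),
    rpow_neg (by linarith)]
  field_simp

lemma Iio_one_subset_integrableExpSet_gammaMeasure {a : ℝ} (ha : 0 < a) :
    Iio 1 ⊆ integrableExpSet id (gammaMeasure a 1) := by
  intro u hu
  by_contra not_integrable
  have mgf_pos : 0 < mgf id (gammaMeasure a 1) u := by
    rw [mgf_gammaMeasure ha hu]
    exact rpow_pos_of_pos (sub_pos.mpr hu) _
  exact mgf_pos.ne' (integral_undef not_integrable)

lemma complexMGF_gammaMeasure {a : ℝ} (ha : 0 < a) {z : ℂ} (hz : z.re < 1) :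
    complexMGF id (gammaMeasure a 1) z = Complex.exp (-(a * Complex.log (1 - z))) := by
  have analytic_mgf : AnalyticOnNhd ℂ (complexMGF id (gammaMeasure a 1)) {z | z.re < 1} :=
    analyticOnNhd_complexMGF.mono fun z (hz : z.re < 1) =>
      interior_maximal (Iio_one_subset_integrableExpSet_gammaMeasure ha) isOpen_Iio hz
  have analytic_exp : AnalyticOnNhd ℂ (fun z : ℂ => Complex.exp (-(a * Complex.log (1 - z))))
      {z | z.re < 1} := by
    refine DifferentiableOn.analyticOnNhd (fun z (hz : z.re < 1) => ?_)
      (isOpen_Iio.preimage Complex.continuous_re)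
    have slit : 1 - z ∈ Complex.slitPlane := Or.inl (by simpa using hz)
    exact (((differentiableAt_id.const_sub 1).clog slit).const_mul _).neg.cexp
      |>.differentiableWithinAt
  have eq_real : ∀ᶠ u : ℝ in nhdsWithin 0 {0}ᶜ, complexMGF id (gammaMeasure a 1) u
      = Complex.exp (-(a * Complex.log (1 - (u : ℂ)))) := by
    filter_upwards [mem_nhdsWithin_of_mem_nhds (Iio_mem_nhds one_pos)] with u hu
    have one_sub_pos : 0 < 1 - u := sub_pos.mpr hu
    rw [complexMGF_ofReal, mgf_gammaMeasure ha hu, rpow_def_of_pos one_sub_pos]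
    push_cast [Complex.ofReal_log one_sub_pos.le]
    ring_nf
  have ofReal_punctured : Filter.Tendsto ((↑) : ℝ → ℂ) (nhdsWithin 0 {0}ᶜ) (nhdsWithin 0 {0}ᶜ) :=
    tendsto_nhdsWithin_iff.mpr ⟨Complex.continuous_ofReal.tendsto' 0 0 Complex.ofReal_zero
      |>.mono_left nhdsWithin_le_nhds, eventually_mem_nhdsWithin.mono fun u hu => by simpa using hu⟩
  exact analytic_mgf.eqOn_of_preconnected_of_frequently_eq analytic_exp
    (convex_halfSpace_re_lt 1).isPreconnected (by simp)
    (ofReal_punctured.frequently eq_real.frequently) hz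

lemma charFun_gammaMeasure {a : ℝ} (ha : 0 < a) (t : ℝ) :
    charFun (gammaMeasure a 1) t = Complex.exp (-(a * Complex.log (1 - t * Complex.I))) := by
  rw [← complexMGF_id_mul_I, complexMGF_gammaMeasure ha (by simp)]

lemma update_add_one_apply {ι : Type*} [DecidableEq ι] (α : ι → ℝ) (i j : ι) :
    Function.update α i (α i + 1) j = α j + if j = i then 1 else 0 := by
  by_cases h : j = i
  · rw [h, Function.update_self, if_pos rfl]
  · rw [Function.update_of_ne h, if_neg h, add_zero]

lemma update_add_one_pos {ι : Type*} [DecidableEq ι] {α : ι → ℝ} (hα : ∀ j, 0 < α j) (i j : ι) :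
    0 < Function.update α i (α i + 1) j := by
  rw [update_add_one_apply]
  have := hα j
  positivity

section WeightedGammaSum

variable {ι : Type*} [Fintype ι] {α x : ι → ℝ}

lemma measurable_weightedSum (x : ι → ℝ) : Measurable fun y : ι → ℝ => ∑ j, x j * y j := by
  fun_prop

/-- The law of `∑ j, x j * Y j` for independent `Y j` of law `gammaMeasure (α j) 1`. -/
def weightedGammaSum (α x : ι → ℝ) : Measure ℝ :=
  (Measure.pi fun j => gammaMeasure (α j) 1).map fun y => ∑ j, x j * y j

lemma isProbabilityMeasure_weightedGammaSum (hα : ∀ j, 0 < α j) (x : ι → ℝ) :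
    IsProbabilityMeasure (weightedGammaSum α x) := by
  have (j : ι) := isProbabilityMeasure_gammaMeasure (hα j) one_pos
  exact Measure.isProbabilityMeasure_map (measurable_weightedSum x).aemeasurable

lemma pi_gammaMeasure_eq_map_withDensity {r : ι → ℝ} (hα : ∀ j, 0 < α j) (hr : ∀ j, 0 < r j) :
    Measure.pi (fun j => gammaMeasure (α j) 1)
      = ((Measure.pi fun j => gammaMeasure (α j) 1).withDensity fun y =>
          ∏ j, ENNReal.ofReal (r j ^ α j * exp (-((r j - 1) * y j)))).map fun y j => r j * y j := by
  have (j : ι) := isProbabilityMeasure_gammaMeasure (hα j) one_pos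
  have (j : ι) := isProbabilityMeasure_gammaMeasure (hα j) (hr j)
  have tilt (j : ι) := gammaMeasure_eq_withDensity_exp (α j) (hr j)
  have (j : ι) : SigmaFinite ((gammaMeasure (α j) 1).withDensity fun t =>
      ENNReal.ofReal (r j ^ α j * exp (-((r j - 1) * t)))) := tilt j ▸ inferInstance
  rw [← pi_withDensity (g := fun j t => ENNReal.ofReal (r j ^ α j * exp (-((r j - 1) * t))))
    fun j => by fun_prop]
  simp only [← tilt]
  rw [Measure.pi_map_pi fun j => (measurable_const_mul (r j)).aemeasurable]
  simp only [map_mul_gammaMeasure _ (hr _)]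

lemma pi_gammaMeasure_nonneg_eq_lintegral_exp (hα : ∀ j, 0 < α j) (hx : ∀ j, -1 < x j)
    {c : ι → ℝ} {l : ℝ} (hl : 0 < l) (hc : ∀ j, l * (c j * (1 + x j)) = x j) :
    Measure.pi (fun j => gammaMeasure (α j) 1) {y | 0 ≤ ∑ j, c j * y j}
      = ENNReal.ofReal (∏ j, (1 + x j) ^ α j)
        * ∫⁻ v in Ici 0, ENNReal.ofReal (exp (-v)) ∂weightedGammaSum α x := by
  have hr (j : ι) : 0 < 1 + x j := by linarith [hx j]
  have preimage_eq : (fun (y : ι → ℝ) j => (1 + x j) * y j) ⁻¹' {y | 0 ≤ ∑ j, c j * y j}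
      = (fun y => ∑ j, x j * y j) ⁻¹' Ici 0 := by
    ext y
    have : ∑ j, x j * y j = l * ∑ j, c j * ((1 + x j) * y j) := by
      rw [Finset.mul_sum]
      exact Finset.sum_congr rfl fun j _ => by linear_combination (-y j) * hc j
    simp only [mem_preimage, mem_ofPred_eq, mem_Ici, this, mul_nonneg_iff_of_pos_left hl]
  have density_eq (y : ι → ℝ) :
      ∏ j, ENNReal.ofReal ((1 + x j) ^ α j * exp (-((1 + x j - 1) * y j)))
        = ENNReal.ofReal (∏ j, (1 + x j) ^ α j) * ENNReal.ofReal (exp (-∑ j, x j * y j)) := by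
    rw [← ENNReal.ofReal_mul (Finset.prod_nonneg fun j _ => (rpow_pos_of_pos (hr j) _).le),
      ← Finset.sum_neg_distrib, exp_sum, ← Finset.prod_mul_distrib,
      ENNReal.ofReal_prod_of_nonneg fun j _ =>
        mul_nonneg (rpow_pos_of_pos (hr j) _).le (exp_nonneg _)]
    simp only [add_sub_cancel_left]
  rw [pi_gammaMeasure_eq_map_withDensity hα hr, Measure.map_apply (by fun_prop)
    (measurableSet_le measurable_const (by fun_prop)), preimage_eq, withDensity_apply _
    (measurableSet_Ici.preimage (by fun_prop)), weightedGammaSum,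
    setLIntegral_map measurableSet_Ici (by fun_prop) (by fun_prop)]
  simp only [density_eq]
  rw [lintegral_const_mul _ (by fun_prop)]

lemma charFun_weightedGammaSum (hα : ∀ j, 0 < α j) (x : ι → ℝ) (t : ℝ) :
    charFun (weightedGammaSum α x) t
      = Complex.exp (-∑ j, α j * Complex.log (1 - (x j * t : ℝ) * Complex.I)) := by
  have (j : ι) := isProbabilityMeasure_gammaMeasure (hα j) one_pos
  have exp_factor (y : ι → ℝ) : Complex.exp (t * (∑ j, x j * y j : ℝ) * Complex.I)
      = ∏ j, Complex.exp ((x j * t : ℝ) * y j * Complex.I) := by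
    rw [← Complex.exp_sum]
    push_cast
    rw [Finset.mul_sum, Finset.sum_mul]
    exact congrArg _ (Finset.sum_congr rfl fun j _ => by ring)
  rw [charFun_apply_real, weightedGammaSum,
    integral_map (measurable_weightedSum x).aemeasurable (by fun_prop)]
  simp only [exp_factor]
  rw [integral_fintype_prod_eq_prod (𝕜 := ℂ)
    (fun j (v : ℝ) => Complex.exp ((x j * t : ℝ) * v * Complex.I)), ← Finset.sum_neg_distrib,
    Complex.exp_sum]
  simp only [← charFun_gammaMeasure (hα _), charFun_apply_real]

lemma weightedGammaSum_update_add_one [DecidableEq ι] (hα : ∀ j, 0 < α j) (x : ι → ℝ) (i : ι) :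
    weightedGammaSum (Function.update α i (α i + 1)) x
      = weightedGammaSum α x ∗ (gammaMeasure 1 1).map (x i * ·) := by
  have hα' := update_add_one_pos hα i
  have := isProbabilityMeasure_weightedGammaSum hα x
  have := isProbabilityMeasure_weightedGammaSum hα' x
  have : IsProbabilityMeasure (gammaMeasure 1 1) :=
    isProbabilityMeasure_gammaMeasure one_pos one_pos
  have : IsProbabilityMeasure ((gammaMeasure 1 1).map (x i * ·)) :=
    Measure.isProbabilityMeasure_map (by fun_prop)
  refine Measure.ext_of_charFun (funext fun t => ?_)
  rw [charFun_conv, charFun_weightedGammaSum hα', charFun_weightedGammaSum hα, charFun_map_mul,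
    charFun_gammaMeasure one_pos, ← Complex.exp_add, ← neg_add]
  simp only [update_add_one_apply, Complex.ofReal_add, apply_ite Complex.ofReal,
    Complex.ofReal_one, Complex.ofReal_zero, add_mul, Finset.sum_add_distrib, ite_mul, one_mul,
    zero_mul, Finset.sum_ite_eq', Finset.mem_univ, if_true]

end WeightedGammaSum

/-! ### Smoothing by an exponential variable -/

/-- The function equal to `exp (-v)` for `0 ≤ v` and to `exp (v / y)` for `v < 0`. Up to the factor
`1 + y` it is the conditional expectation of `exp (-(v + y * E)) * 1_{0 ≤ v + y * E}` for a standard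
exponential variable `E`. -/
def twoSidedExp (y v : ℝ) : ℝ := if 0 ≤ v then exp (-v) else exp (v / y)

lemma measurable_twoSidedExp (y : ℝ) : Measurable (twoSidedExp y) :=
  Measurable.ite measurableSet_Ici (by fun_prop) (by fun_prop)

lemma twoSidedExp_eq {y : ℝ} (hy : 0 < y) (v : ℝ) :
    twoSidedExp y v = exp (-v) * exp (-(1 + y) * max 0 (-v / y)) := by
  rw [twoSidedExp, ← exp_add]
  split_ifs with hv
  · rw [max_eq_left (div_nonpos_of_nonpos_of_nonneg (by linarith) hy.le), mul_zero, add_zero]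
  · rw [max_eq_right (div_nonneg (by linarith) hy.le)]
    congr 1
    field_simp
    ring

lemma lintegral_exp_neg_add_gammaMeasure_one {y : ℝ} (hy : 0 < y) (v : ℝ) :
    ∫⁻ e, (Ici 0).indicator (fun s => ENNReal.ofReal (exp (-s))) (v + y * e) ∂gammaMeasure 1 1
      = ENNReal.ofReal (1 + y)⁻¹ * ENNReal.ofReal (twoSidedExp y v) := by
  have integrand_eq (e : ℝ) : gammaPDF 1 1 e
        * (Ici 0).indicator (fun s => ENNReal.ofReal (exp (-s))) (v + y * e)
      = (Ici (max 0 (-v / y))).indicator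
          (fun e => ENNReal.ofReal (exp (-v) * exp (-(1 + y) * e))) e := by
    simp only [indicator_apply, mem_Ici, max_le_iff, div_le_iff₀ hy]
    rcases lt_or_ge e 0 with he | he
    · rw [gammaPDF_of_neg he, zero_mul, if_neg fun h => absurd h.1 he.not_ge]
    · by_cases hv : 0 ≤ v + y * e
      · rw [if_pos hv, if_pos ⟨he, by linarith⟩, gammaPDF_of_nonneg he, sub_self, rpow_zero,
          one_rpow, Gamma_one, div_one, mul_one, one_mul, one_mul,
          ← ENNReal.ofReal_mul (exp_nonneg _), ← exp_add, ← exp_add]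
        ring_nf
      · rw [if_neg hv, if_neg fun h => hv (by linarith [h.2]), mul_zero]
  rw [gammaMeasure, lintegral_withDensity_eq_lintegral_mul _ (measurable_gammaPDF 1 1)
    (g := fun e => (Ici 0).indicator (fun s => ENNReal.ofReal (exp (-s))) (v + y * e))
    ((Measurable.indicator (by fun_prop) measurableSet_Ici).comp (by fun_prop))]
  simp only [Pi.mul_apply, integrand_eq]
  rw [lintegral_indicator measurableSet_Ici, setLIntegral_congr Ioi_ae_eq_Ici.symm,
    ← ofReal_integral_eq_lintegral_ofReal
      ((integrableOn_exp_mul_Ioi (by linarith) _).const_mul _) (ae_of_all _ fun e => by positivity),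
    integral_const_mul, integral_exp_mul_Ioi (by linarith), twoSidedExp_eq hy,
    ← ENNReal.ofReal_mul (by positivity), neg_div_neg_eq]
  congr 1
  field_simp

lemma lintegral_exp_neg_conv_gammaMeasure_one {y : ℝ} (hy : 0 < y) (ν : Measure ℝ) :
    ∫⁻ v in Ici 0, ENNReal.ofReal (exp (-v)) ∂(ν ∗ (gammaMeasure 1 1).map (y * ·))
      = ENNReal.ofReal (1 + y)⁻¹ * ∫⁻ v, ENNReal.ofReal (twoSidedExp y v) ∂ν := by
  have : IsProbabilityMeasure (gammaMeasure 1 1) :=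
    isProbabilityMeasure_gammaMeasure one_pos one_pos
  have measurable_integrand :
      Measurable ((Ici (0 : ℝ)).indicator fun s => ENNReal.ofReal (exp (-s))) :=
    Measurable.indicator (by fun_prop) measurableSet_Ici
  rw [← lintegral_indicator measurableSet_Ici, Measure.lintegral_conv measurable_integrand,
    ← lintegral_const_mul _ (measurable_twoSidedExp y).ennreal_ofReal]
  refine lintegral_congr fun v => ?_
  rw [← lintegral_exp_neg_add_gammaMeasure_one hy]
  exact lintegral_map (measurable_integrand.comp (measurable_const_add v)) (measurable_const_mul y)

lemma prod_rpow_update_add_one {ι : Type*} [Fintype ι] [DecidableEq ι] {r : ι → ℝ}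
    (hr : ∀ j, 0 < r j) (α : ι → ℝ) (i : ι) :
    ∏ j, r j ^ Function.update α i (α i + 1) j = (∏ j, r j ^ α j) * r i := by
  have rpow_boole (j : ι) : r j ^ (if j = i then 1 else 0 : ℝ) = if j = i then r j else 1 := by
    split_ifs <;> simp
  simp only [update_add_one_apply, rpow_add (hr _), Finset.prod_mul_distrib, rpow_boole,
    Finset.prod_ite_eq', Finset.mem_univ, if_true]

/-- Exponential tilting by `1 + x j`; the extra unit of mass at `i` turns the discontinuous
integrand `exp (-v) * 1_{0 ≤ v}` into the continuous `twoSidedExp (x i)`. -/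
lemma pi_gammaMeasure_update_nonneg_eq_lintegral {ι : Type*} [Fintype ι] [DecidableEq ι]
    {α x c : ι → ℝ} {l : ℝ} (hα : ∀ j, 0 < α j) (hx : ∀ j, -1 < x j) (hl : 0 < l)
    (hc : ∀ j, l * (c j * (1 + x j)) = x j) {i : ι} (hi : 0 < x i) :
    Measure.pi (fun j => gammaMeasure (Function.update α i (α i + 1) j) 1) {y | 0 ≤ ∑ j, c j * y j}
      = ENNReal.ofReal (∏ j, (1 + x j) ^ α j)
        * ∫⁻ v, ENNReal.ofReal (twoSidedExp (x i) v) ∂weightedGammaSum α x := by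
  have one_add_pos (j : ι) : 0 < 1 + x j := by linarith [hx j]
  rw [pi_gammaMeasure_nonneg_eq_lintegral_exp (update_add_one_pos hα i) hx hl hc,
    weightedGammaSum_update_add_one hα, lintegral_exp_neg_conv_gammaMeasure_one hi,
    prod_rpow_update_add_one one_add_pos, ← mul_assoc,
    ← ENNReal.ofReal_mul (mul_nonneg (Finset.prod_nonneg fun j _ =>
      (rpow_pos_of_pos (one_add_pos j) _).le) (one_add_pos i).le),
    mul_inv_cancel_right₀ (one_add_pos i).ne']

/-! ### Parseval's formula and the two-sided exponential -/

section Parseval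

open FourierTransform

variable {V : Type*} [NormedAddCommGroup V] [InnerProductSpace ℝ V] [FiniteDimensional ℝ V]
  [MeasurableSpace V] [BorelSpace V] {g : V → ℂ}

lemma integral_eq_integral_fourier_mul_charFun (hg : Continuous g) (hg_int : Integrable g)
    (hg_fourier : Integrable (𝓕 g)) (ν : Measure V) [IsFiniteMeasure ν] :
    ∫ v, g v ∂ν = ∫ w, 𝓕 g w * charFun ν ((2 * π) • w) := by
  have inversion (v : V) :
      g v = ∫ w, 𝓕 g w * Complex.exp (inner ℝ v ((2 * π) • w) * Complex.I) := by
    conv_lhs => rw [← hg.fourierInv_fourier_eq hg_int hg_fourier, Real.fourierInv_eq']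
    refine integral_congr_ae (ae_of_all _ fun w => ?_)
    simp only [smul_eq_mul, inner_smul_right, real_inner_comm v w]
    rw [mul_comm]
  have integrable_prod : Integrable (fun z : V × V =>
      𝓕 g z.2 * Complex.exp (inner ℝ z.1 ((2 * π) • z.2) * Complex.I)) (ν.prod volume) := by
    refine (hg_fourier.comp_snd ν).mul_bdd (c := 1) (by fun_prop) (ae_of_all _ fun z => ?_)
    rw [Complex.norm_exp_ofReal_mul_I]
  simp only [inversion]
  rw [integral_integral_swap integrable_prod]
  simp only [integral_const_mul, charFun_apply]

lemma norm_integral_sub_integral_le_integral_norm_fourier (hg : Continuous g)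
    (hg_int : Integrable g) (hg_fourier : Integrable (𝓕 g)) (ν₁ ν₂ : Measure V)
    [IsFiniteMeasure ν₁] [IsFiniteMeasure ν₂] :
    ‖∫ v, g v ∂ν₁ - ∫ v, g v ∂ν₂‖
      ≤ ∫ w, ‖𝓕 g w‖ * ‖charFun ν₁ ((2 * π) • w) - charFun ν₂ ((2 * π) • w)‖ := by
  have integrable_mul (ν : Measure V) [IsFiniteMeasure ν] :
      Integrable fun w => 𝓕 g w * charFun ν ((2 * π) • w) :=
    hg_fourier.mul_bdd (c := ν.real univ)
      (measurable_charFun.comp (measurable_const_smul _)).aestronglyMeasurable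
      (ae_of_all _ fun w => norm_charFun_le _)
  rw [integral_eq_integral_fourier_mul_charFun hg hg_int hg_fourier ν₁,
    integral_eq_integral_fourier_mul_charFun hg hg_int hg_fourier ν₂,
    ← integral_sub (integrable_mul ν₁) (integrable_mul ν₂)]
  refine (norm_integral_le_integral_norm _).trans_eq (integral_congr_ae (ae_of_all _ fun w => ?_))
  simp only [← mul_sub, norm_mul]

end Parseval

lemma twoSidedExp_of_nonneg (y : ℝ) {v : ℝ} (hv : 0 ≤ v) : twoSidedExp y v = exp (-v) := if_pos hv

lemma twoSidedExp_of_nonpos (y : ℝ) {v : ℝ} (hv : v ≤ 0) : twoSidedExp y v = exp (v / y) := by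
  rcases hv.eq_or_lt with rfl | hv
  · simp [twoSidedExp]
  · exact if_neg hv.not_ge

lemma twoSidedExp_nonneg (y v : ℝ) : 0 ≤ twoSidedExp y v := by
  unfold twoSidedExp
  split_ifs <;> positivity

lemma twoSidedExp_le_one {y : ℝ} (hy : 0 ≤ y) (v : ℝ) : twoSidedExp y v ≤ 1 := by
  rcases le_total 0 v with hv | hv
  · rw [twoSidedExp_of_nonneg y hv]
    exact exp_le_one_iff.mpr (neg_nonpos.mpr hv)
  · rw [twoSidedExp_of_nonpos y hv]
    exact exp_le_one_iff.mpr (div_nonpos_of_nonpos_of_nonneg hv hy)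

lemma continuous_twoSidedExp (y : ℝ) : Continuous (twoSidedExp y) :=
  Continuous.if_le (by fun_prop) (by fun_prop) continuous_const continuous_id
    (by rintro v rfl; simp)

section TwoSidedExp

variable {y : ℝ}

lemma integrable_twoSidedExp (hy : 0 < y) : Integrable (twoSidedExp y) := by
  rw [← integrableOn_univ, ← Iic_union_Ioi (a := (0 : ℝ))]
  refine IntegrableOn.union ?_ ?_
  · refine (integrableOn_exp_mul_Iic (inv_pos.mpr hy) 0).congr_fun (fun v hv => ?_)
      measurableSet_Iic
    rw [twoSidedExp_of_nonpos y hv, div_eq_inv_mul]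
  · refine (integrableOn_exp_mul_Ioi (neg_one_lt_zero) 0).congr_fun (fun v hv => ?_)
      measurableSet_Ioi
    simp only [twoSidedExp_of_nonneg y (le_of_lt hv), neg_one_mul]

lemma one_add_ofReal_mul_I_ne_zero (t : ℝ) : (1 + t * Complex.I : ℂ) ≠ 0 :=
  fun h => by simpa using congrArg Complex.re h

open FourierTransform in
lemma fourier_twoSidedExp_eq_sub (hy : 0 < y) (w : ℝ) :
    𝓕 (fun v => (twoSidedExp y v : ℂ)) w
      = 1 / (y⁻¹ - (2 * π * w : ℝ) * Complex.I) - 1 / (-1 - (2 * π * w : ℝ) * Complex.I) := by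
  set t := 2 * π * w
  have integrand_nonpos : EqOn (fun v : ℝ => Complex.exp ((-2 * π * v * w : ℝ) * Complex.I)
      • (twoSidedExp y v : ℂ)) (fun v => Complex.exp ((y⁻¹ - t * Complex.I) * v)) (Iic 0) := by
    intro v hv
    simp only [twoSidedExp_of_nonpos y hv, smul_eq_mul, Complex.ofReal_exp, ← Complex.exp_add, t]
    push_cast
    ring_nf
  have integrand_nonneg : EqOn (fun v : ℝ => Complex.exp ((-2 * π * v * w : ℝ) * Complex.I)
      • (twoSidedExp y v : ℂ)) (fun v => Complex.exp ((-1 - t * Complex.I) * v)) (Ioi 0) := by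
    intro v hv
    simp only [twoSidedExp_of_nonneg y (le_of_lt hv), smul_eq_mul, Complex.ofReal_exp,
      ← Complex.exp_add, t]
    push_cast
    ring_nf
  have re_pos : 0 < (y⁻¹ - t * Complex.I : ℂ).re := by simp [hy]
  have re_neg : (-1 - t * Complex.I : ℂ).re < 0 := by simp
  rw [Real.fourier_real_eq_integral_exp_smul, ← intervalIntegral.integral_Iic_add_Ioi
      ((integrableOn_exp_mul_complex_Iic re_pos 0).congr_fun integrand_nonpos.symm
        measurableSet_Iic)
      ((integrableOn_exp_mul_complex_Ioi re_neg 0).congr_fun integrand_nonneg.symm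
        measurableSet_Ioi),
    setIntegral_congr_fun measurableSet_Iic integrand_nonpos,
    setIntegral_congr_fun measurableSet_Ioi integrand_nonneg,
    integral_exp_mul_complex_Iic re_pos, integral_exp_mul_complex_Ioi re_neg, Complex.ofReal_zero,
    mul_zero, mul_zero, Complex.exp_zero, neg_div, ← sub_eq_add_neg]

open FourierTransform in
lemma fourier_twoSidedExp (hy : 0 < y) (w : ℝ) :
    𝓕 (fun v => (twoSidedExp y v : ℂ)) w = (1 + y)
      / ((1 + (2 * π * w : ℝ) * Complex.I) * (1 + (-(y * (2 * π * w)) : ℝ) * Complex.I)) := by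
  set t := 2 * π * w with ht
  have ne_zero := one_add_ofReal_mul_I_ne_zero t
  have ne_zero' := one_add_ofReal_mul_I_ne_zero (-(y * t))
  have hy' : (y : ℂ) ≠ 0 := by exact_mod_cast hy.ne'
  have factor : (y⁻¹ - t * Complex.I : ℂ) = (1 + (-(y * t) : ℝ) * Complex.I) / y := by
    push_cast
    field_simp
    ring
  rw [fourier_twoSidedExp_eq_sub hy, ← ht, factor,
    show (-1 - t * Complex.I : ℂ) = -(1 + t * Complex.I) by ring, one_div_div, div_neg,
    sub_neg_eq_add, div_add_div _ _ ne_zero' ne_zero, mul_comm (1 + t * Complex.I : ℂ) (1 + _)]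
  congr 1
  push_cast
  ring

lemma norm_one_add_ofReal_mul_I (t : ℝ) : ‖(1 + t * Complex.I : ℂ)‖ = √(1 + t ^ 2) := by
  simpa using Complex.norm_add_mul_I 1 t

open FourierTransform in
lemma norm_fourier_twoSidedExp (hy : 0 < y) (w : ℝ) :
    ‖𝓕 (fun v => (twoSidedExp y v : ℂ)) w‖
      = (1 + y) * ((√(1 + (2 * π * w) ^ 2))⁻¹ * (√(1 + (y * (2 * π * w)) ^ 2))⁻¹) := by
  rw [fourier_twoSidedExp hy, norm_div, norm_mul, norm_one_add_ofReal_mul_I,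
    norm_one_add_ofReal_mul_I, neg_sq, ← Complex.ofReal_one, ← Complex.ofReal_add,
    Complex.norm_of_nonneg (by linarith), div_eq_mul_inv, mul_inv]

open FourierTransform in
lemma integrable_fourier_twoSidedExp (hy : 0 < y) :
    Integrable (𝓕 fun v => (twoSidedExp y v : ℂ)) := by
  have hpi : 2 * π ≠ 0 := by positivity
  refine Integrable.mono' (g := fun w => (1 + y) * ((1 + (2 * π * w) ^ 2)⁻¹
    + (1 + (y * (2 * π * w)) ^ 2)⁻¹)) (Integrable.const_mul (Integrable.add ?_ ?_) _) ?_
    (ae_of_all _ fun w => ?_)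
  · exact integrable_inv_one_add_sq.comp_mul_left' hpi
  · exact (integrable_inv_one_add_sq.comp_mul_left' hy.ne').comp_mul_left' hpi
  · exact (VectorFourier.fourierIntegral_continuous Real.continuous_fourierChar
      (by exact continuous_inner) (integrable_twoSidedExp hy).ofReal).aestronglyMeasurable
  · have amgm (a b : ℝ) (ha : 0 ≤ a) (hb : 0 ≤ b) : (√a)⁻¹ * (√b)⁻¹ ≤ a⁻¹ + b⁻¹ := by
      have := two_mul_le_add_sq (√a)⁻¹ (√b)⁻¹
      rw [inv_pow, inv_pow, sq_sqrt ha, sq_sqrt hb] at this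
      nlinarith [inv_nonneg.mpr (sqrt_nonneg a), inv_nonneg.mpr (sqrt_nonneg b),
        mul_nonneg (inv_nonneg.mpr (sqrt_nonneg a)) (inv_nonneg.mpr (sqrt_nonneg b))]
    rw [norm_fourier_twoSidedExp hy]
    gcongr
    exact amgm _ _ (by positivity) (by positivity)

/-- The Fourier transform of `twoSidedExp y` at frequency `t` has norm at most
`(1 + y) / √(1 + t ^ 2)`, whence the weight in `h`. -/
lemma abs_integral_twoSidedExp_sub_le (hy : 0 < y) (ν₁ ν₂ : Measure ℝ) [IsFiniteMeasure ν₁]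
    [IsFiniteMeasure ν₂] {D : ℝ → ℝ} (hD : Integrable D)
    (h : ∀ t, ‖charFun ν₁ t - charFun ν₂ t‖ / √(1 + t ^ 2) ≤ D t) :
    |∫ v, twoSidedExp y v ∂ν₁ - ∫ v, twoSidedExp y v ∂ν₂| ≤ (1 + y) * (2 * π)⁻¹ * ∫ t, D t := by
  have smoothing := norm_integral_sub_integral_le_integral_norm_fourier
    (Complex.continuous_ofReal.comp (continuous_twoSidedExp y)) (integrable_twoSidedExp hy).ofReal
    (integrable_fourier_twoSidedExp hy) ν₁ ν₂
  have integrand_le (w : ℝ) : ‖FourierTransform.fourier (fun v => (twoSidedExp y v : ℂ)) w‖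
      * ‖charFun ν₁ ((2 * π) • w) - charFun ν₂ ((2 * π) • w)‖ ≤ (1 + y) * D (2 * π * w) := by
    have decay : (√(1 + (y * (2 * π * w)) ^ 2))⁻¹ ≤ 1 :=
      inv_le_one_of_one_le₀ (one_le_sqrt.mpr (by nlinarith [sq_nonneg (y * (2 * π * w))]))
    rw [norm_fourier_twoSidedExp hy, smul_eq_mul]
    calc _ ≤ (1 + y) * ((√(1 + (2 * π * w) ^ 2))⁻¹ * 1)
          * ‖charFun ν₁ (2 * π * w) - charFun ν₂ (2 * π * w)‖ := by gcongr
      _ = (1 + y) * (‖charFun ν₁ (2 * π * w) - charFun ν₂ (2 * π * w)‖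
          / √(1 + (2 * π * w) ^ 2)) := by ring
      _ ≤ _ := by gcongr; exact h _
  calc _ = ‖∫ v, (twoSidedExp y v : ℂ) ∂ν₁ - ∫ v, (twoSidedExp y v : ℂ) ∂ν₂‖ := by
        rw [integral_complex_ofReal, integral_complex_ofReal, ← Complex.ofReal_sub,
          Complex.norm_real, norm_eq_abs]
    _ ≤ ∫ w, (1 + y) * D (2 * π * w) :=
        smoothing.trans (integral_mono_of_nonneg (ae_of_all _ fun w => by positivity)
          ((hD.comp_mul_left' (by positivity)).const_mul _) (ae_of_all _ integrand_le))
    _ = (1 + y) * (2 * π)⁻¹ * ∫ t, D t := by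
        rw [integral_const_mul, Measure.integral_comp_mul_left,
          abs_of_pos (a := (2 * π)⁻¹) (by positivity), smul_eq_mul, mul_assoc]

end TwoSidedExp

/-! ### Gaussian approximation of characteristic functions -/

lemma norm_log_sub_logTaylor_le_of_re_nonneg (n : ℕ) {z : ℂ} (hz : 0 ≤ z.re) :
    ‖Complex.log (1 + z) - Complex.logTaylor (n + 1) z‖ ≤ ‖z‖ ^ (n + 1) / (n + 1) := by
  have one_le_re {s : ℝ} (hs : 0 ≤ s) : 1 ≤ (1 + s * z).re := by
    simpa using mul_nonneg hs hz
  have deriv_error (s : ℝ) (hs : 0 ≤ s) :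
      HasDerivAt (fun s : ℝ => Complex.log (1 + s * z) - Complex.logTaylor (n + 1) (s * z))
        ((-(s * z)) ^ n * (1 + s * z)⁻¹ * z) s :=
    (Complex.hasDerivAt_log_sub_logTaylor n (Or.inl (one_pos.trans_le (one_le_re hs)))).comp s
      (by simpa using Complex.ofRealCLM.hasDerivAt.mul_const z)
  have deriv_bound (s : ℝ) :
      HasDerivAt (fun s : ℝ => ‖z‖ ^ (n + 1) * s ^ (n + 1) / (n + 1))
        (‖z‖ ^ (n + 1) * s ^ n) s := by
    refine (((hasDerivAt_pow (n + 1) s).const_mul _).div_const _).congr_deriv ?_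
    push_cast
    field_simp
  have norm_deriv_le (s : ℝ) (hs : s ∈ Ico (0 : ℝ) 1) :
      ‖(-(s * z)) ^ n * (1 + s * z)⁻¹ * z‖ ≤ ‖z‖ ^ (n + 1) * s ^ n := by
    have inv_le_one : ‖1 + s * z‖⁻¹ ≤ 1 :=
      inv_le_one_of_one_le₀ ((one_le_re hs.1).trans (Complex.re_le_norm _))
    rw [norm_mul, norm_mul, norm_pow, norm_neg, norm_mul, norm_inv, Complex.norm_of_nonneg hs.1]
    calc _ ≤ (s * ‖z‖) ^ n * 1 * ‖z‖ := by have := hs.1; gcongr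
      _ = _ := by ring
  simpa using image_norm_le_of_norm_deriv_right_le_deriv_boundary
    (fun s hs => (deriv_error s hs.1).continuousAt.continuousWithinAt)
    (fun s hs => (deriv_error s hs.1).hasDerivWithinAt)
    (by simp [Complex.logTaylor_at_zero]) deriv_bound norm_deriv_le (right_mem_Icc.mpr zero_le_one)

lemma norm_log_one_sub_mul_I_add_sub_le (u : ℝ) :
    ‖Complex.log (1 - u * Complex.I) + u * Complex.I - u ^ 2 / 2‖ ≤ |u| ^ 3 / 3 := by
  have taylor := norm_log_sub_logTaylor_le_of_re_nonneg 2 (z := -(u * Complex.I)) (by simp)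
  have logTaylor_eq : Complex.logTaylor 3 (-(u * Complex.I)) = -(u * Complex.I) + u ^ 2 / 2 := by
    norm_num [Complex.logTaylor, Finset.sum_range_succ, mul_pow]
  rw [logTaylor_eq, norm_neg, norm_mul, Complex.norm_I, mul_one, Complex.norm_real,
    norm_eq_abs, Nat.cast_ofNat, two_add_one_eq_three] at taylor
  convert taylor using 2
  · ring_nf
  · norm_num

lemma norm_exp_sub_exp_le {a b : ℂ} {C : ℝ} (ha : a.re ≤ C) (hb : b.re ≤ C) :
    ‖Complex.exp a - Complex.exp b‖ ≤ exp C * ‖a - b‖ :=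
  Convex.norm_image_sub_le_of_norm_hasDerivWithin_le
    (fun z _ => (Complex.hasDerivAt_exp z).hasDerivWithinAt)
    (fun z hz => (Complex.norm_exp z).trans_le (exp_le_exp.mpr hz))
    (convex_halfSpace_re_le C) hb ha

lemma re_log_one_sub_mul_I (u : ℝ) :
    (Complex.log (1 - u * Complex.I)).re = log (1 + u ^ 2) / 2 := by
  rw [Complex.log_re, show (1 - u * Complex.I : ℂ) = 1 + (-u : ℝ) * Complex.I by push_cast; ring,
    norm_one_add_ofReal_mul_I, neg_sq, log_sqrt (by positivity)]

section CharFunComparison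

variable {ι : Type*} [Fintype ι] {α x : ι → ℝ} {R σ : ℝ}

/-- Concavity of `log` compares each `log (1 + (x j * t) ^ 2)` with `log (1 + (R * t) ^ 2)`, and
Bernoulli's inequality then trades the exponent `σ ^ 2 / (8 * R ^ 2) ≥ 1` for the argument. -/
lemma log_one_add_le_sum_mul_log_one_add (hα : ∀ j, 0 ≤ α j) (hR₀ : 0 < R) (hR : ∀ j, |x j| ≤ R)
    (hσ : σ ^ 2 = ∑ j, α j * x j ^ 2) (hRσ : 8 * R ^ 2 ≤ σ ^ 2) (t : ℝ) :
    8 * log (1 + (σ * t) ^ 2 / 8) ≤ ∑ j, α j * log (1 + (x j * t) ^ 2) := by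
  have concavity (j : ι) :
      x j ^ 2 / R ^ 2 * log (1 + (R * t) ^ 2) ≤ log (1 + (x j * t) ^ 2) := by
    have ratio_le_one : x j ^ 2 / R ^ 2 ≤ 1 := by
      rw [div_le_one (by positivity)]
      exact sq_le_sq.mpr ((hR j).trans (le_abs_self R))
    rw [← log_rpow (by positivity)]
    refine log_le_log (by positivity) ((rpow_one_add_le_one_add_mul_self
      (by nlinarith [sq_nonneg (R * t)]) (by positivity) ratio_le_one).trans_eq ?_)
    field_simp
  have bernoulli : log (1 + (σ * t) ^ 2 / 8) ≤ σ ^ 2 / (8 * R ^ 2) * log (1 + (R * t) ^ 2) := by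
    rw [← log_rpow (by positivity)]
    refine log_le_log (by positivity) (le_trans (le_of_eq ?_) (one_add_mul_self_le_rpow_one_add
      (by nlinarith [sq_nonneg (R * t)]) ((one_le_div (by positivity)).mpr hRσ)))
    field_simp
  calc 8 * log (1 + (σ * t) ^ 2 / 8)
      ≤ 8 * (σ ^ 2 / (8 * R ^ 2) * log (1 + (R * t) ^ 2)) := by gcongr
    _ = ∑ j, α j * (x j ^ 2 / R ^ 2 * log (1 + (R * t) ^ 2)) := by
      rw [hσ, Finset.sum_div, Finset.sum_mul, Finset.mul_sum]
      refine Finset.sum_congr rfl fun j _ => ?_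
      field_simp
    _ ≤ ∑ j, α j * log (1 + (x j * t) ^ 2) :=
      Finset.sum_le_sum fun j _ => mul_le_mul_of_nonneg_left (concavity j) (hα j)

lemma norm_sum_log_sub_le (hα : ∀ j, 0 ≤ α j) (hR : ∀ j, |x j| ≤ R)
    (hσ : σ ^ 2 = ∑ j, α j * x j ^ 2) (hx : ∑ j, α j * x j = 0) (t : ℝ) :
    ‖∑ j, α j * Complex.log (1 - (x j * t : ℝ) * Complex.I) - ((σ * t) ^ 2 / 2 : ℝ)‖
      ≤ σ ^ 2 * |t| ^ 3 / 3 * R := by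
  have centered : ∑ j, α j * Complex.log (1 - (x j * t : ℝ) * Complex.I) - ((σ * t) ^ 2 / 2 : ℝ)
      = ∑ j, α j * (Complex.log (1 - (x j * t : ℝ) * Complex.I)
          + (x j * t : ℝ) * Complex.I - (x j * t : ℝ) ^ 2 / 2) := by
    have mean : ∑ j, (α j : ℂ) * x j = 0 := by exact_mod_cast hx
    have variance : ∑ j, (α j : ℂ) * x j ^ 2 = (σ : ℂ) ^ 2 := by exact_mod_cast hσ.symm
    calc _ = ∑ j, α j * Complex.log (1 - (x j * t : ℝ) * Complex.I)
          + (∑ j, (α j : ℂ) * x j) * (t * Complex.I)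
          - (∑ j, (α j : ℂ) * x j ^ 2) * (t ^ 2 / 2) := by
          rw [mean, variance]
          push_cast
          ring
      _ = _ := by
          rw [Finset.sum_mul, Finset.sum_mul, ← Finset.sum_add_distrib, ← Finset.sum_sub_distrib]
          refine Finset.sum_congr rfl fun j _ => ?_
          push_cast
          ring
  have term_le (j : ι) : ‖α j * (Complex.log (1 - (x j * t : ℝ) * Complex.I)
      + (x j * t : ℝ) * Complex.I - (x j * t : ℝ) ^ 2 / 2)‖
      ≤ α j * x j ^ 2 * (R * |t| ^ 3 / 3) := by
    rw [norm_mul, Complex.norm_of_nonneg (hα j), mul_assoc]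
    refine mul_le_mul_of_nonneg_left ?_ (hα j)
    calc _ ≤ |x j * t| ^ 3 / 3 := norm_log_one_sub_mul_I_add_sub_le _
      _ = x j ^ 2 * (|x j| * |t| ^ 3 / 3) := by rw [abs_mul, ← sq_abs (x j)]; ring
      _ ≤ _ := by gcongr; exact hR j
  calc _ ≤ ∑ j, α j * x j ^ 2 * (R * |t| ^ 3 / 3) :=
        centered ▸ norm_sum_le_of_le _ fun j _ => term_le j
    _ = _ := by rw [← Finset.sum_mul, ← hσ]; ring

lemma norm_charFun_weightedGammaSum_sub_gaussian_le (hα : ∀ j, 0 < α j) (hR₀ : 0 < R)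
    (hR : ∀ j, |x j| ≤ R) (hσ : σ ^ 2 = ∑ j, α j * x j ^ 2) (hRσ : 8 * R ^ 2 ≤ σ ^ 2)
    (hx : ∑ j, α j * x j = 0) (t : ℝ) :
    ‖charFun (weightedGammaSum α x) t - charFun (gaussianReal 0 (σ ^ 2).toNNReal) t‖
      ≤ σ ^ 2 * |t| ^ 3 / 3 * R * ((1 + (σ * t) ^ 2 / 8) ^ 4)⁻¹ := by
  set L := log (1 + (σ * t) ^ 2 / 8)
  have gaussian_exponent : (t * (0 : ℝ) * Complex.I - ((σ ^ 2).toNNReal : ℝ) * t ^ 2 / 2 : ℂ)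
      = -((σ * t) ^ 2 / 2 : ℝ) := by
    rw [coe_toNNReal _ (sq_nonneg σ)]
    push_cast
    ring
  have exp_L : exp (-4 * L) = ((1 + (σ * t) ^ 2 / 8) ^ 4)⁻¹ := by
    rw [neg_mul, exp_neg, show 4 * L = (4 : ℕ) * L by norm_num, exp_nat_mul,
      exp_log (by positivity)]
  have re_gamma : (-∑ j, α j * Complex.log (1 - (x j * t : ℝ) * Complex.I)).re ≤ -4 * L := by
    simp only [Complex.neg_re, Complex.re_sum, Complex.re_ofReal_mul, re_log_one_sub_mul_I]
    have := log_one_add_le_sum_mul_log_one_add (fun j => (hα j).le) hR₀ hR hσ hRσ t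
    simp only [← mul_div_assoc, ← Finset.sum_div]
    linarith
  have re_gaussian : (-((σ * t) ^ 2 / 2 : ℝ) : ℂ).re ≤ -4 * L := by
    rw [Complex.neg_re, Complex.ofReal_re]
    linarith [log_le_sub_one_of_pos (x := 1 + (σ * t) ^ 2 / 8) (by positivity)]
  rw [charFun_weightedGammaSum hα, charFun_gaussianReal, gaussian_exponent,
    mul_comm _ (_)⁻¹, ← exp_L]
  refine (norm_exp_sub_exp_le re_gamma re_gaussian).trans ?_
  rw [neg_sub_neg, norm_sub_rev]
  gcongr
  exact norm_sum_log_sub_le (fun j => (hα j).le) hR hσ hx t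

lemma cube_add_sq_le_five_mul (s : ℝ) : s ^ 3 + s ^ 2 ≤ 5 * (1 + s ^ 2 / 9) ^ 3 := by
  have q_ge : 1 ≤ 1 + s ^ 2 / 9 := by linarith [sq_nonneg s]
  have amgm : s ≤ 3 / 2 * (1 + s ^ 2 / 9) := by linarith [sq_nonneg (s - 3)]
  calc s ^ 3 + s ^ 2 = s ^ 2 * (1 + s) := by ring
    _ ≤ s ^ 2 * (1 + 3 / 2 * (1 + s ^ 2 / 9)) := by gcongr
    _ ≤ 5 * (1 + s ^ 2 / 9) ^ 3 := by
      generalize hq : 1 + s ^ 2 / 9 = q at *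
      rw [show s ^ 2 = 9 * (q - 1) by rw [← hq]; ring]
      nlinarith [mul_nonneg (zero_le_one.trans q_ge) (sq_nonneg (q - 8 / 5)),
        sq_nonneg (q - 8 / 5)]

lemma mul_abs_div_sqrt_one_add_sq_le (hσ : 0 < σ) (t : ℝ) :
    σ * |t| / √(1 + t ^ 2) ≤ √2 * σ / (1 + σ) * (1 + σ * |t|) := by
  have one_add_abs_le : 1 + |t| ≤ √2 * √(1 + t ^ 2) := by
    rw [← sqrt_mul zero_le_two, ← sq_abs t]
    exact le_sqrt_of_sq_le (by nlinarith [sq_nonneg (|t| - 1)])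
  rw [div_mul_eq_mul_div, div_le_div_iff₀ (by positivity) (by positivity)]
  calc σ * |t| * (1 + σ) ≤ σ * (1 + σ * |t|) * (1 + |t|) := by
        nlinarith [mul_nonneg (mul_nonneg hσ.le hσ.le) (sq_nonneg |t|)]
    _ ≤ σ * (1 + σ * |t|) * (√2 * √(1 + t ^ 2)) := by gcongr
    _ = _ := by ring

lemma norm_charFun_weightedGammaSum_sub_gaussian_div_le (hα : ∀ j, 0 < α j) (hR₀ : 0 < R)
    (hR : ∀ j, |x j| ≤ R) (hσ₀ : 0 < σ) (hσ : σ ^ 2 = ∑ j, α j * x j ^ 2)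
    (hRσ : 8 * R ^ 2 ≤ σ ^ 2) (hx : ∑ j, α j * x j = 0) (t : ℝ) :
    ‖charFun (weightedGammaSum α x) t - charFun (gaussianReal 0 (σ ^ 2).toNNReal) t‖
        / √(1 + t ^ 2)
      ≤ 5 * √2 * R / (3 * (1 + σ)) * (1 + (σ / 3 * t) ^ 2)⁻¹ := by
  set τ := σ * |t| with hτ
  have τ_sq : (σ * t) ^ 2 = τ ^ 2 := by rw [mul_pow, mul_pow, sq_abs]
  have q_eq : 1 + (σ / 3 * t) ^ 2 = 1 + τ ^ 2 / 9 := by rw [← τ_sq]; ring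
  calc _ ≤ σ ^ 2 * |t| ^ 3 / 3 * R * ((1 + (σ * t) ^ 2 / 8) ^ 4)⁻¹ / √(1 + t ^ 2) := by
        gcongr
        exact norm_charFun_weightedGammaSum_sub_gaussian_le hα hR₀ hR hσ hRσ hx t
    _ = R / (3 * σ) * (τ ^ 2 * ((1 + τ ^ 2 / 8) ^ 4)⁻¹) * (τ / √(1 + t ^ 2)) := by
        rw [τ_sq, hτ]
        field_simp
    _ ≤ R / (3 * σ) * (τ ^ 2 * ((1 + τ ^ 2 / 9) ^ 4)⁻¹) * (√2 * σ / (1 + σ) * (1 + τ)) := by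
        gcongr
        · norm_num
        · exact mul_abs_div_sqrt_one_add_sq_le hσ₀ t
    _ = R * √2 / (3 * (1 + σ)) * (τ ^ 3 + τ ^ 2) * ((1 + τ ^ 2 / 9) ^ 4)⁻¹ := by
        field_simp
        ring
    _ ≤ R * √2 / (3 * (1 + σ)) * (5 * (1 + τ ^ 2 / 9) ^ 3) * ((1 + τ ^ 2 / 9) ^ 4)⁻¹ := by
        gcongr
        exact cube_add_sq_le_five_mul τ
    _ = _ := by
        rw [q_eq]
        field_simp

lemma abs_integral_twoSidedExp_weightedGammaSum_sub_gaussian_le (hα : ∀ j, 0 < α j) (hR₀ : 0 < R)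
    (hR : ∀ j, |x j| ≤ R) (hσ₀ : 0 < σ) (hσ : σ ^ 2 = ∑ j, α j * x j ^ 2)
    (hRσ : 8 * R ^ 2 ≤ σ ^ 2) (hx : ∑ j, α j * x j = 0) {y : ℝ} (hy : 0 < y) :
    |∫ v, twoSidedExp y v ∂weightedGammaSum α x
        - ∫ v, twoSidedExp y v ∂gaussianReal 0 (σ ^ 2).toNNReal|
      ≤ 5 / 2 * √2 * (1 + y) / (1 + σ) * (R / σ) := by
  have := isProbabilityMeasure_weightedGammaSum hα x
  have integral_majorant : ∫ t, 5 * √2 * R / (3 * (1 + σ)) * (1 + (σ / 3 * t) ^ 2)⁻¹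
      = 5 * √2 * R / (3 * (1 + σ)) * (3 / σ * π) := by
    rw [integral_const_mul, Measure.integral_comp_mul_left (fun t : ℝ => (1 + t ^ 2)⁻¹),
      integral_univ_inv_one_add_sq, abs_of_pos (by positivity), smul_eq_mul, inv_div]
  refine (abs_integral_twoSidedExp_sub_le hy _ _
    ((integrable_inv_one_add_sq.comp_mul_left' (by positivity)).const_mul _)
    (norm_charFun_weightedGammaSum_sub_gaussian_div_le hα hR₀ hR hσ₀ hσ hRσ hx)).trans_eq ?_
  rw [integral_majorant]
  field_simp

end CharFunComparison

/-! ### Mills' ratio and the Gaussian side -/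

/-- Mills' ratio: `millsRatio s` is the standard Gaussian tail at `s` divided by the density
at `s`. -/
def millsRatio (s : ℝ) : ℝ := ∫ u in Ioi 0, exp (-s * u) * exp (-u ^ 2 / 2)

lemma integrable_exp_mul_exp_neg_sq (s : ℝ) :
    Integrable fun u => exp (-s * u) * exp (-u ^ 2 / 2) := by
  refine (((integrable_exp_neg_mul_sq one_half_pos).comp_add_right s).const_mul
    (exp (s ^ 2 / 2))).congr (ae_of_all _ fun u => ?_)
  simp only [← exp_add]
  ring_nf

lemma millsRatio_antitone : Antitone millsRatio := by
  intro s t hst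
  refine setIntegral_mono_on (integrable_exp_mul_exp_neg_sq t).integrableOn
    (integrable_exp_mul_exp_neg_sq s).integrableOn measurableSet_Ioi fun u (hu : 0 < u) => ?_
  gcongr

lemma millsRatio_nonneg (s : ℝ) : 0 ≤ millsRatio s :=
  setIntegral_nonneg measurableSet_Ioi fun u _ => by positivity

lemma millsRatio_div_le (s : ℝ) {c : ℝ} (hc : 1 ≤ c) : millsRatio (s / c) ≤ c * millsRatio s := by
  have c_pos : 0 < c := by linarith
  have scale := integral_comp_mul_left_Ioi (fun u => exp (-(s / c) * u) * exp (-u ^ 2 / 2)) 0 c_pos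
  rw [mul_zero, smul_eq_mul, eq_inv_mul_iff_mul_eq₀ c_pos.ne'] at scale
  rw [millsRatio, ← scale]
  refine mul_le_mul_of_nonneg_left (setIntegral_mono_on
    ((integrable_exp_mul_exp_neg_sq (s / c)).comp_mul_left' c_pos.ne').integrableOn
    (integrable_exp_mul_exp_neg_sq s).integrableOn measurableSet_Ioi fun u _ => ?_) c_pos.le
  rw [show -(s / c) * (c * u) = -s * u by field_simp]
  have : u ^ 2 ≤ (c * u) ^ 2 := by
    rw [mul_pow]
    exact le_mul_of_one_le_left (sq_nonneg u) (one_le_pow₀ hc)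
  gcongr

lemma integral_exp_neg_mul_Ioi {s : ℝ} (hs : 0 < s) : ∫ u in Ioi 0, exp (-s * u) = 1 / s := by
  rw [integral_exp_mul_Ioi (by linarith), mul_zero, exp_zero, neg_div_neg_eq]

lemma millsRatio_le_one_div {s : ℝ} (hs : 0 < s) : millsRatio s ≤ 1 / s := by
  rw [← integral_exp_neg_mul_Ioi hs]
  refine setIntegral_mono_on (integrable_exp_mul_exp_neg_sq s).integrableOn
    (integrableOn_exp_mul_Ioi (by linarith) 0) measurableSet_Ioi fun u _ => ?_
  exact mul_le_of_le_one_right (exp_nonneg _) (exp_le_one_iff.mpr (by linarith [sq_nonneg u]))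

lemma one_div_sub_one_div_cube_le_millsRatio {s : ℝ} (hs : 0 < s) :
    1 / s - 1 / s ^ 3 ≤ millsRatio s := by
  have integrable_exp := integrableOn_exp_mul_Ioi (neg_lt_zero.mpr hs) 0
  have integrable_sq : IntegrableOn (fun u : ℝ => u ^ 2 * exp (-s * u)) (Ioi 0) := by
    simpa using integrableOn_rpow_mul_exp_neg_mul_rpow (s := 2) (by norm_num) one_pos hs
  have second_moment : ∫ u in Ioi 0, u ^ 2 * exp (-s * u) = 2 / s ^ 3 := by
    have gamma_integral := integral_rpow_mul_exp_neg_mul_Ioi (a := (2 : ℕ) + 1) (by positivity) hs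
    simp only [add_sub_cancel_right, rpow_natCast, Gamma_nat_eq_factorial] at gamma_integral
    rw [← Nat.cast_add_one, rpow_natCast, Nat.factorial_two] at gamma_integral
    simp only [neg_mul, gamma_integral]
    push_cast
    ring
  have taylor_integral : ∫ u in Ioi 0, (exp (-s * u) - 1 / 2 * (u ^ 2 * exp (-s * u)))
      = 1 / s - 1 / s ^ 3 := by
    rw [integral_sub integrable_exp (integrable_sq.const_mul _), integral_const_mul,
      integral_exp_neg_mul_Ioi hs, second_moment]
    ring
  rw [← taylor_integral]
  refine setIntegral_mono_on (integrable_exp.sub (integrable_sq.const_mul _))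
    (integrable_exp_mul_exp_neg_sq s).integrableOn measurableSet_Ioi fun u _ => ?_
  have := mul_le_mul_of_nonneg_left (add_one_le_exp (-u ^ 2 / 2)) (exp_nonneg (-s * u))
  linarith

lemma exp_neg_half_div_le_millsRatio {s : ℝ} (hs : 0 < s) :
    exp (-(1 / 2)) / (1 + s) ≤ millsRatio s := by
  have exp_bound : 1 / (1 + s) ≤ (1 - exp (-s)) / s := by
    have : exp (-s) ≤ (1 + s)⁻¹ := by
      rw [exp_neg]
      gcongr
      linarith [add_one_le_exp s]
    rw [le_div_iff₀ hs]
    calc 1 / (1 + s) * s = 1 - (1 + s)⁻¹ := by field_simp; ring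
      _ ≤ 1 - exp (-s) := by linarith
  have integral_unit : ∫ u in Ioc 0 1, exp (-s * u) * exp (-(1 / 2))
      = (1 - exp (-s)) / s * exp (-(1 / 2)) := by
    rw [integral_mul_const, ← intervalIntegral.integral_of_le zero_le_one,
      intervalIntegral.integral_comp_mul_left exp (neg_ne_zero.mpr hs.ne'), integral_exp, mul_one,
      mul_zero, exp_zero, smul_eq_mul]
    field_simp
    ring
  calc exp (-(1 / 2)) / (1 + s) = 1 / (1 + s) * exp (-(1 / 2)) := by ring
    _ ≤ ∫ u in Ioc 0 1, exp (-s * u) * exp (-(1 / 2)) := by rw [integral_unit]; gcongr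
    _ ≤ ∫ u in Ioc 0 1, exp (-s * u) * exp (-u ^ 2 / 2) := by
      refine setIntegral_mono_on (Continuous.integrableOn_Ioc (by fun_prop))
        (integrable_exp_mul_exp_neg_sq s).integrableOn measurableSet_Ioc fun u hu => ?_
      have := pow_le_one₀ hu.1.le hu.2 (n := 2)
      gcongr
      linarith
    _ ≤ millsRatio s := setIntegral_mono_set (integrable_exp_mul_exp_neg_sq s).integrableOn
      (ae_of_all _ fun u => by positivity) Ioc_subset_Ioi_self.eventuallyLE

lemma gaussianPDFReal_zero_one (u : ℝ) :
    gaussianPDFReal 0 1 u = (√(2 * π))⁻¹ * exp (-u ^ 2 / 2) := by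
  simp [gaussianPDFReal]

lemma gaussianReal_Ici_eq_millsRatio (z : ℝ) :
    gaussianReal 0 1 (Ici z)
      = ENNReal.ofReal (exp (-z ^ 2 / 2) * ((√(2 * π))⁻¹ * millsRatio z)) := by
  have shift := (measurePreserving_add_right volume z).setIntegral_preimage_emb
    (measurableEmbedding_addRight z) (gaussianPDFReal 0 1) (Ioi z)
  rw [gaussianReal_apply_eq_integral 0 one_ne_zero, integral_Ici_eq_integral_Ioi, ← shift,
    preimage_add_const_Ioi, sub_self, millsRatio, ← integral_const_mul, ← integral_const_mul]
  congr 2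
  funext u
  rw [gaussianPDFReal_zero_one, mul_left_comm, ← exp_add, ← exp_add]
  ring_nf

lemma integral_twoSidedExp_gaussianReal {σ y : ℝ} (hσ : 0 ≤ σ) :
    ∫ v, twoSidedExp y v ∂gaussianReal 0 (σ ^ 2).toNNReal
      = (√(2 * π))⁻¹ * (millsRatio σ + millsRatio (σ / y)) := by
  have map_eq : gaussianReal 0 (σ ^ 2).toNNReal = (gaussianReal 0 1).map (σ * ·) := by
    rw [gaussianReal_map_const_mul, mul_zero, mul_one, toNNReal_of_nonneg (sq_nonneg σ)]
  have integrand_pos : EqOn (fun u => gaussianPDFReal 0 1 u • twoSidedExp y (σ * u))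
      (fun u => (√(2 * π))⁻¹ * (exp (-σ * u) * exp (-u ^ 2 / 2))) (Ioi 0) := by
    intro u (hu : 0 < u)
    simp only [smul_eq_mul, gaussianPDFReal_zero_one, twoSidedExp_of_nonneg y (mul_nonneg hσ hu.le)]
    ring_nf
  have integrand_neg : EqOn (fun u => gaussianPDFReal 0 1 u • twoSidedExp y (σ * u))
      (fun u => (√(2 * π))⁻¹ * (exp (-(σ / y) * -u) * exp (-(-u) ^ 2 / 2))) (Iic 0) := by
    intro u (hu : u ≤ 0)
    simp only [smul_eq_mul, gaussianPDFReal_zero_one,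
      twoSidedExp_of_nonpos y (mul_nonpos_of_nonneg_of_nonpos hσ hu)]
    ring_nf
  have integrable_pos := ((integrable_exp_mul_exp_neg_sq σ).const_mul (√(2 * π))⁻¹).integrableOn
    (s := Ioi 0)
  have integrable_neg :=
    ((integrable_exp_mul_exp_neg_sq (σ / y)).const_mul (√(2 * π))⁻¹).comp_neg.integrableOn
      (s := Iic 0)
  rw [map_eq, integral_map (by fun_prop) (continuous_twoSidedExp y).aestronglyMeasurable,
    integral_gaussianReal_eq_integral_smul one_ne_zero, ← intervalIntegral.integral_Iic_add_Ioi
      (integrable_neg.congr_fun integrand_neg.symm measurableSet_Iic)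
      (integrable_pos.congr_fun integrand_pos.symm measurableSet_Ioi),
    setIntegral_congr_fun measurableSet_Iic integrand_neg,
    setIntegral_congr_fun measurableSet_Ioi integrand_pos,
    integral_comp_neg_Iic 0 fun u => (√(2 * π))⁻¹ * (exp (-(σ / y) * u) * exp (-u ^ 2 / 2)),
    neg_zero, integral_const_mul, integral_const_mul, millsRatio, millsRatio]
  ring

section GaussianSide

variable {σ y : ℝ}

lemma mul_millsRatio_le_millsRatio_div (hσ : 0 < σ) (hy : 0 < y) (hyσ : 10 * y ≤ σ) :
    0.99 * y * millsRatio σ ≤ millsRatio (σ / y) := by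
  have ratio_sq : (y / σ) ^ 2 ≤ 0.1 ^ 2 := by
    gcongr
    rw [div_le_iff₀ hσ]
    linarith
  calc 0.99 * y * millsRatio σ ≤ 0.99 * y * (1 / σ) := by
        gcongr
        exact millsRatio_le_one_div hσ
    _ = 0.99 * (y / σ) := by ring
    _ ≤ (1 - (y / σ) ^ 2) * (y / σ) := by gcongr; linarith
    _ = 1 / (σ / y) - 1 / (σ / y) ^ 3 := by field_simp
    _ ≤ millsRatio (σ / y) := one_div_sub_one_div_cube_le_millsRatio (by positivity)

lemma gaussianReal_Ici_le_integral_twoSidedExp {z : ℝ} (hσ : 0 < σ) (hy : 0 < y)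
    (hyσ : 10 * y ≤ σ) (hz : σ / √(1 + y) ≤ z) :
    gaussianReal 0 1 (Ici z) ≤ ENNReal.ofReal
      (exp (-z ^ 2 / 2) * ∫ v, twoSidedExp y v ∂gaussianReal 0 (σ ^ 2).toNNReal) := by
  have sqrt_le : √(1 + y) ≤ 1 + 0.99 * y := sqrt_le_iff.mpr ⟨by positivity, by nlinarith⟩
  rw [gaussianReal_Ici_eq_millsRatio, integral_twoSidedExp_gaussianReal hσ.le]
  gcongr
  calc millsRatio z ≤ millsRatio (σ / √(1 + y)) := millsRatio_antitone hz
    _ ≤ √(1 + y) * millsRatio σ := millsRatio_div_le σ (one_le_sqrt.mpr (by linarith))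
    _ ≤ (1 + 0.99 * y) * millsRatio σ := by
      gcongr
      exact millsRatio_nonneg σ
    _ = millsRatio σ + 0.99 * y * millsRatio σ := by ring
    _ ≤ _ := by
      gcongr
      exact mul_millsRatio_le_millsRatio_div hσ hy hyσ

lemma le_inv_sqrt_two_pi_mul_exp_neg_half : 0.24 ≤ (√(2 * π))⁻¹ * exp (-(1 / 2)) := by
  have numeric : 2 * π * exp 1 ≤ 0.24⁻¹ ^ 2 := by
    calc 2 * π * exp 1 ≤ 2 * 3.1416 * 2.7182818286 := by
          gcongr
          exacts [pi_lt_d4.le, exp_one_lt_d9.le]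
      _ ≤ _ := by norm_num
  have inv_eq : (√(2 * π))⁻¹ * exp (-(1 / 2)) = (√(2 * π * exp 1))⁻¹ := by
    rw [sqrt_mul (x := 2 * π) (by positivity), ← exp_half, mul_inv, exp_neg]
  rw [inv_eq, le_inv_comm₀ (by norm_num) (by positivity)]
  exact sqrt_le_iff.mpr ⟨by norm_num, numeric⟩

lemma le_integral_twoSidedExp_gaussianReal (hσ : 0 < σ) (hy : 0 < y) (hyσ : 10 * y ≤ σ) :
    0.2376 * (1 + y) / (1 + σ) ≤ ∫ v, twoSidedExp y v ∂gaussianReal 0 (σ ^ 2).toNNReal := by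
  have mills_le := mul_millsRatio_le_millsRatio_div hσ hy hyσ
  have := millsRatio_nonneg σ
  rw [integral_twoSidedExp_gaussianReal hσ.le]
  calc 0.2376 * (1 + y) / (1 + σ) = 0.99 * (1 + y) * (0.24 / (1 + σ)) := by ring
    _ ≤ 0.99 * (1 + y) * ((√(2 * π))⁻¹ * exp (-(1 / 2)) / (1 + σ)) := by
      gcongr
      exact le_inv_sqrt_two_pi_mul_exp_neg_half
    _ = (√(2 * π))⁻¹ * (0.99 * (1 + y) * (exp (-(1 / 2)) / (1 + σ))) := by ring
    _ ≤ (√(2 * π))⁻¹ * (0.99 * (1 + y) * millsRatio σ) := by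
      gcongr
      exact exp_neg_half_div_le_millsRatio hσ
    _ ≤ _ := by
      gcongr
      linarith

end GaussianSide

/-! ### Duality for `Kinf` -/

/-- `x` is the dual tilt of the weights `α` with multiplier `l`: among the probability vectors `q`
with `μ ≤ ∑ i, f i * q i`, the one closest to the normalised `α` in Kullback–Leibler divergence has
weights proportional to `α i * (1 + x i)`, and `1 + x i = (1 - l * (f i - μ))⁻¹`. The last identity
is stored without division. -/
structure IsDualTilt {ι : Type*} [Fintype ι] (α f : ι → ℝ) (μ l : ℝ) (x : ι → ℝ) : Prop where
  multiplier_pos : 0 < l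
  neg_one_lt : ∀ i, -1 < x i
  multiplier_mul : ∀ i, l * ((f i - μ) * (1 + x i)) = x i
  sum_mul_eq_zero : ∑ i, α i * x i = 0

section DualTiltExistence

variable {ι : Type*} [Fintype ι] {α : ι → ℝ}

lemma le_div_one_sub_mul {l c : ℝ} (hl : 0 ≤ l) (hlc : l * c < 1) : c ≤ c / (1 - l * c) := by
  rw [le_div_iff₀ (by linarith)]
  linarith [mul_nonneg hl (sq_nonneg c)]

lemma exists_sum_mul_div_one_sub_mul_nonneg {c : ι → ℝ} (hα : ∀ i, 0 < α i)
    (hc : ∑ i, α i * c i < 0) {i₁ : ι} (hi₁ : 0 < c i₁) (hmax : ∀ i, c i ≤ c i₁) :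
    ∃ L, 0 < L ∧ L * c i₁ < 1 ∧ 0 ≤ ∑ i, α i * (c i / (1 - L * c i)) := by
  set D := -∑ i, α i * c i
  have D_pos : 0 < D := by linarith
  have α_pos := hα i₁
  set L := D / (α i₁ * c i₁ ^ 2 + D * c i₁) with hL
  have L_pos : 0 < L := by positivity
  have one_sub_eq : 1 - L * c i₁ = α i₁ * c i₁ ^ 2 / (α i₁ * c i₁ ^ 2 + D * c i₁) := by
    rw [hL]
    field_simp
    ring
  have L_mul_lt_one : L * c i₁ < 1 := by
    rw [← sub_pos, one_sub_eq]
    positivity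
  have gain : α i₁ * (c i₁ / (1 - L * c i₁)) - α i₁ * c i₁ = D := by
    rw [one_sub_eq]
    field_simp
    ring
  have term_nonneg : ∀ i, 0 ≤ α i * (c i / (1 - L * c i)) - α i * c i := fun i =>
    sub_nonneg.mpr <| mul_le_mul_of_nonneg_left (le_div_one_sub_mul L_pos.le
      ((mul_le_mul_of_nonneg_left (hmax i) L_pos.le).trans_lt L_mul_lt_one)) (hα i).le
  have single := Finset.single_le_sum (fun i _ => term_nonneg i) (Finset.mem_univ i₁)
  rw [gain, Finset.sum_sub_distrib] at single
  exact ⟨L, L_pos, L_mul_lt_one, by linarith⟩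

lemma exists_sum_mul_div_one_sub_mul_eq_zero {c : ι → ℝ} (hα : ∀ i, 0 < α i)
    (hc : ∑ i, α i * c i < 0) {i₁ : ι} (hi₁ : 0 < c i₁) (hmax : ∀ i, c i ≤ c i₁) :
    ∃ l, 0 < l ∧ (∀ i, l * c i < 1) ∧ ∑ i, α i * (c i / (1 - l * c i)) = 0 := by
  obtain ⟨L, L_pos, L_mul_lt_one, sum_nonneg⟩ :=
    exists_sum_mul_div_one_sub_mul_nonneg hα hc hi₁ hmax
  have mul_lt_one : ∀ l ∈ Icc 0 L, ∀ i, l * c i < 1 := fun l hl i =>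
    ((mul_le_mul_of_nonneg_left (hmax i) hl.1).trans
      (mul_le_mul_of_nonneg_right hl.2 hi₁.le)).trans_lt L_mul_lt_one
  have continuousOn : ContinuousOn (fun l => ∑ i, α i * (c i / (1 - l * c i))) (Icc 0 L) :=
    continuousOn_finsetSum _ fun i _ => continuousOn_const.mul <| continuousOn_const.div
      (by fun_prop) fun l hl => (sub_pos.mpr (mul_lt_one l hl i)).ne'
  have sum_zero_neg : ∑ i, α i * (c i / (1 - 0 * c i)) < 0 := by simpa using hc
  obtain ⟨l, hl, sum_eq⟩ :=
    intermediate_value_Icc L_pos.le continuousOn ⟨sum_zero_neg.le, sum_nonneg⟩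
  have l_ne : l ≠ 0 := by
    rintro rfl
    exact sum_zero_neg.ne sum_eq
  exact ⟨l, hl.1.lt_of_ne' l_ne, mul_lt_one l hl, sum_eq⟩

lemma exists_isDualTilt {f : ι → ℝ} {μ : ℝ} (hα : ∀ i, 0 < α i)
    (hμ : ∑ i, α i * (f i - μ) < 0) {i₁ : ι} (hi₁ : μ < f i₁) (hmax : ∀ i, f i ≤ f i₁) :
    ∃ l x, IsDualTilt α f μ l x := by
  obtain ⟨l, l_pos, mul_lt_one, sum_eq⟩ := exists_sum_mul_div_one_sub_mul_eq_zero hα hμ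
    (sub_pos.mpr hi₁) fun i => sub_le_sub_right (hmax i) μ
  have one_add_eq : ∀ i, 1 + l * (f i - μ) / (1 - l * (f i - μ)) = (1 - l * (f i - μ))⁻¹ := by
    intro i
    have := (sub_pos.mpr (mul_lt_one i)).ne'
    field_simp
    ring
  refine ⟨l, fun i => l * (f i - μ) / (1 - l * (f i - μ)), l_pos, fun i => ?_, fun i => ?_, ?_⟩
  · have := inv_pos.mpr (sub_pos.mpr (mul_lt_one i))
    linarith [one_add_eq i]
  · rw [one_add_eq, ← mul_assoc, div_eq_mul_inv]
  · simp only [mul_div_assoc, mul_left_comm _ l, ← Finset.mul_sum, sum_eq, mul_zero]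

end DualTiltExistence

namespace IsDualTilt

section Fintype

variable {ι : Type*} [Fintype ι] {α f x : ι → ℝ} {μ l : ℝ}

lemma one_sub_mul_eq_inv (h : IsDualTilt α f μ l x) (i : ι) : 1 - l * (f i - μ) = (1 + x i)⁻¹ :=
  eq_inv_of_mul_eq_one_left (by linarith [h.multiplier_mul i])

lemma le_of_le (h : IsDualTilt α f μ l x) {i j : ι} (hij : f i ≤ f j) : x i ≤ x j := by
  have one_add_pos : ∀ i, 0 < 1 + x i := fun i => by linarith [h.neg_one_lt i]
  have inv_le : (1 + x j)⁻¹ ≤ (1 + x i)⁻¹ := by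
    rw [← h.one_sub_mul_eq_inv, ← h.one_sub_mul_eq_inv]
    have := h.multiplier_pos
    gcongr
  linarith [(inv_le_inv₀ (one_add_pos j) (one_add_pos i)).mp inv_le]

lemma pos_of_lt (h : IsDualTilt α f μ l x) {i : ι} (hi : μ < f i) : 0 < x i := by
  rw [← h.multiplier_mul i]
  exact mul_pos h.multiplier_pos (mul_pos (sub_pos.mpr hi) (by linarith [h.neg_one_lt i]))

lemma div_const (h : IsDualTilt α f μ l x) (T : ℝ) : IsDualTilt (fun i => α i / T) f μ l x where
  multiplier_pos := h.multiplier_pos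
  neg_one_lt := h.neg_one_lt
  multiplier_mul := h.multiplier_mul
  sum_mul_eq_zero := by
    simp only [div_mul_eq_mul_div, ← Finset.sum_div, h.sum_mul_eq_zero, zero_div]

end Fintype

section Kinf

variable {m : ℕ} {p f x : Fin (m + 1) → ℝ} {μ l : ℝ}

lemma sum_mul_one_add (h : IsDualTilt p f μ l x) (hp : ∑ i, p i = 1) :
    ∑ i, p i * (1 + x i) = 1 := by
  simp only [mul_add, mul_one, Finset.sum_add_distrib, hp, h.sum_mul_eq_zero, add_zero]

lemma sum_mul_mul_one_add (h : IsDualTilt p f μ l x) (hp : ∑ i, p i = 1) :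
    ∑ i, f i * (p i * (1 + x i)) = μ := by
  have multiplier_mul_sum : l * ∑ i, (f i * (p i * (1 + x i)) - μ * (p i * (1 + x i))) = 0 := by
    rw [Finset.mul_sum, ← h.sum_mul_eq_zero]
    exact Finset.sum_congr rfl fun i _ => by linear_combination p i * h.multiplier_mul i
  have := (mul_eq_zero.mp multiplier_mul_sum).resolve_left h.multiplier_pos.ne'
  rw [Finset.sum_sub_distrib, ← Finset.mul_sum, h.sum_mul_one_add hp] at this
  linarith

/- Weak duality: `log t ≤ t - 1` at the ratio of `q i` to the tilted weight `p i * (1 + x i)`. -/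
lemma neg_sum_mul_log_le_klReal (h : IsDualTilt p f μ l x) (hp₀ : ∀ i, 0 < p i)
    (hp₁ : ∑ i, p i = 1) {q : Fin (m + 1) → ℝ} (hq₀ : ∀ i, 0 < q i) (hq₁ : ∑ i, q i = 1)
    (hq : μ ≤ ∑ i, f i * q i) : -∑ i, p i * log (1 + x i) ≤ klReal p q := by
  have term_le : ∀ i, -(p i * log (1 + x i)) ≤
      p i * log (p i / q i) + (q i * (1 - l * (f i - μ)) - p i) := by
    intro i
    have one_add_pos : 0 < 1 + x i := by linarith [h.neg_one_lt i]
    have p_pos := hp₀ i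
    have log_le := mul_le_mul_of_nonneg_left
      (log_le_sub_one_of_pos (div_pos (hq₀ i) (mul_pos p_pos one_add_pos))) p_pos.le
    rw [log_div (hq₀ i).ne' (mul_pos p_pos one_add_pos).ne', log_mul p_pos.ne' one_add_pos.ne']
      at log_le
    have ratio_eq : p i * (q i / (p i * (1 + x i)) - 1) = q i * (1 - l * (f i - μ)) - p i := by
      rw [h.one_sub_mul_eq_inv]
      field_simp
    rw [log_div p_pos.ne' (hq₀ i).ne']
    linarith
  have slack : ∑ i, (q i * (1 - l * (f i - μ)) - p i) = l * (μ - ∑ i, f i * q i) := by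
    calc ∑ i, (q i * (1 - l * (f i - μ)) - p i)
        = ∑ i, ((1 + l * μ) * q i - l * (f i * q i) - p i) :=
          Finset.sum_congr rfl fun i _ => by ring
      _ = (1 + l * μ) * ∑ i, q i - l * ∑ i, f i * q i - ∑ i, p i := by
          simp only [Finset.sum_sub_distrib, ← Finset.mul_sum]
      _ = _ := by rw [hq₁, hp₁]; ring
  calc -∑ i, p i * log (1 + x i)
      ≤ ∑ i, (p i * log (p i / q i) + (q i * (1 - l * (f i - μ)) - p i)) := by
        rw [← Finset.sum_neg_distrib]
        exact Finset.sum_le_sum fun i _ => term_le i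
    _ = klReal p q + l * (μ - ∑ i, f i * q i) := by
        rw [Finset.sum_add_distrib, slack, klReal]
        simp only [(hp₀ _).ne', if_false]
    _ ≤ klReal p q := add_le_of_nonpos_right
        (mul_nonpos_of_nonneg_of_nonpos h.multiplier_pos.le (by linarith))

lemma neg_sum_mul_log_le_Kinf (h : IsDualTilt p f μ l x) (hp₀ : ∀ i, 0 < p i)
    (hp₁ : ∑ i, p i = 1) : -∑ i, p i * log (1 + x i) ≤ Kinf p μ f := by
  have tilted_pos : ∀ i, 0 < p i * (1 + x i) := fun i =>
    mul_pos (hp₀ i) (by linarith [h.neg_one_lt i])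
  refine le_csInf ⟨_, fun i => p i * (1 + x i),
    ⟨fun i => (tilted_pos i).le, h.sum_mul_one_add hp₁⟩, fun i hi => absurd hi (tilted_pos i).ne',
    (h.sum_mul_mul_one_add hp₁).ge, rfl⟩ ?_
  rintro _ ⟨q, ⟨q_nonneg, q_sum⟩, q_ac, hq, rfl⟩
  exact h.neg_sum_mul_log_le_klReal hp₀ hp₁
    (fun i => (q_nonneg i).lt_of_ne' fun hi => (hp₀ i).ne' (q_ac i hi)) q_sum hq

lemma neg_sum_mul_log_le_sum_mul_Kinf {α : Fin (m + 1) → ℝ} (h : IsDualTilt α f μ l x)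
    (hα : ∀ i, 0 < α i) :
    -∑ i, α i * log (1 + x i) ≤ (∑ j, α j) * Kinf (fun i => α i / ∑ j, α j) μ f := by
  have sum_pos : 0 < ∑ j, α j := Finset.sum_pos (fun i _ => hα i) Finset.univ_nonempty
  have normalized := (h.div_const (∑ j, α j)).neg_sum_mul_log_le_Kinf
    (fun i => div_pos (hα i) sum_pos) (by rw [← Finset.sum_div, div_self sum_pos.ne'])
  simp only [div_mul_eq_mul_div, ← Finset.sum_div, ← neg_div] at normalized
  exact (div_le_iff₀' sum_pos).mp normalized

end Kinf

end IsDualTilt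

lemma sq_div_one_add_le {u y : ℝ} (hu : -1 < u) (huy : u ≤ y) (hy : 0 ≤ y) :
    u ^ 2 / (1 + y) ≤ 2 * (u - log (1 + u)) := by
  rcases le_total 0 u with u_nonneg | u_nonpos
  · have log_le : log (1 + u) ≤ sinh (log (1 + u)) :=
      self_le_sinh_iff.mpr (log_nonneg (by linarith))
    rw [sinh_log (by linarith)] at log_le
    calc u ^ 2 / (1 + y) ≤ u ^ 2 / (1 + u) := by gcongr
      _ = 2 * (u - (1 + u - (1 + u)⁻¹) / 2) := by field_simp; ring
      _ ≤ 2 * (u - log (1 + u)) := by gcongr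
  · have series :=
      hasSum_pow_div_log_of_abs_lt_one (x := -u) (abs_lt.mpr ⟨by linarith, by linarith⟩)
    have partial_sum_le := sum_le_hasSum (Finset.range 2) (fun n _ => by
      have := neg_nonneg.mpr u_nonpos
      positivity) series
    norm_num [Finset.sum_range_succ] at partial_sum_le
    calc u ^ 2 / (1 + y) ≤ u ^ 2 := div_le_self (sq_nonneg u) (by linarith)
      _ ≤ 2 * (u - log (1 + u)) := by linarith

lemma IsDualTilt.sum_mul_sq_div_le {m : ℕ} {α f x : Fin (m + 1) → ℝ} {μ l : ℝ}
    (h : IsDualTilt α f μ l x) (hα : ∀ i, 0 < α i) {y : ℝ} (hy : 0 ≤ y) (hxy : ∀ i, x i ≤ y) :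
    (∑ i, α i * x i ^ 2) / (1 + y)
      ≤ 2 * (∑ j, α j) * Kinf (fun i => α i / ∑ j, α j) μ f := by
  calc (∑ i, α i * x i ^ 2) / (1 + y) = ∑ i, α i * (x i ^ 2 / (1 + y)) := by
        simp only [Finset.sum_div, mul_div_assoc]
    _ ≤ ∑ i, α i * (2 * (x i - log (1 + x i))) := Finset.sum_le_sum fun i _ =>
        mul_le_mul_of_nonneg_left (sq_div_one_add_le (h.neg_one_lt i) (hxy i) hy) (hα i).le
    _ = 2 * (∑ i, α i * x i + -∑ i, α i * log (1 + x i)) := by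
        rw [← Finset.sum_neg_distrib, ← Finset.sum_add_distrib, Finset.mul_sum]
        exact Finset.sum_congr rfl fun i _ => by ring
    _ ≤ _ := by
        rw [h.sum_mul_eq_zero, zero_add, mul_assoc]
        gcongr
        exact h.neg_sum_mul_log_le_sum_mul_Kinf hα

/-! ### The comparison -/

lemma one_sub_mul_le_integral_twoSidedExp_weightedGammaSum {ι : Type*} [Fintype ι] {α x : ι → ℝ}
    {R σ ε y : ℝ} (hα : ∀ j, 0 < α j) (hx : ∑ j, α j * x j = 0) (hR : ∀ j, |x j| ≤ R)
    (hσ₀ : 0 < σ) (hσ : σ ^ 2 = ∑ j, α j * x j ^ 2) (hε₀ : 0 ≤ ε) (hε₁ : ε ≤ 1)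
    (hRσ : 15 * R ≤ ε * σ) (hy : 0 < y) (hyR : y ≤ R) :
    (1 - ε) * ∫ v, twoSidedExp y v ∂gaussianReal 0 (σ ^ 2).toNNReal
      ≤ ∫ v, twoSidedExp y v ∂weightedGammaSum α x := by
  have R_pos : 0 < R := hy.trans_le hyR
  have R_le : 15 * R ≤ σ := hRσ.trans (mul_le_of_le_one_left hσ₀.le hε₁)
  have sqrt_two_le : √2 ≤ 1.4143 := sqrt_le_iff.mpr (by norm_num)
  have approx := abs_integral_twoSidedExp_weightedGammaSum_sub_gaussian_le hα R_pos hR hσ₀ hσ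
    (by nlinarith) hx hy
  have error_le : 5 / 2 * √2 * (1 + y) / (1 + σ) * (R / σ)
      ≤ ε * ∫ v, twoSidedExp y v ∂gaussianReal 0 (σ ^ 2).toNNReal := by
    calc 5 / 2 * √2 * (1 + y) / (1 + σ) * (R / σ)
        ≤ 5 / 2 * 1.4143 * (1 + y) / (1 + σ) * (ε / 15) := by
          gcongr ?_ * (1 + y) / (1 + σ) * ?_
          · gcongr
          · rw [div_le_div_iff₀ hσ₀ (by norm_num)]
            linarith
      _ = 5 / 2 * 1.4143 / 15 * (ε * ((1 + y) / (1 + σ))) := by ring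
      _ ≤ 0.2376 * (ε * ((1 + y) / (1 + σ))) := by gcongr; norm_num
      _ = ε * (0.2376 * (1 + y) / (1 + σ)) := by ring
      _ ≤ _ := by
          gcongr
          exact le_integral_twoSidedExp_gaussianReal hσ₀ hy (by linarith)
  linarith [(abs_le.mp (approx.trans error_le)).1]

/- The product is `exp (-(∑ j, α j) * KL)`, where `KL` is the divergence from the normalised `α` to
its dual tilt and hence at most `Kinf`. -/
lemma IsDualTilt.gaussianReal_Ici_le_prod_mul {m : ℕ} {α f x : Fin (m + 1) → ℝ} {μ l σ y : ℝ}
    (h : IsDualTilt α f μ l x) (hα : ∀ i, 0 < α i) (hσ₀ : 0 < σ)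
    (hσ : σ ^ 2 = ∑ j, α j * x j ^ 2) (hy : 0 < y) (hxy : ∀ i, x i ≤ y) (hyσ : 10 * y ≤ σ) :
    gaussianReal 0 1 {z | √(2 * (∑ j, α j) * Kinf (fun i => α i / ∑ j, α j) μ f) ≤ z}
      ≤ ENNReal.ofReal ((∏ j, (1 + x j) ^ α j) *
          ∫ v, twoSidedExp y v ∂gaussianReal 0 (σ ^ 2).toNNReal) := by
  have sq_div_le := h.sum_mul_sq_div_le hα hy.le hxy
  rw [← hσ] at sq_div_le
  set z := √(2 * (∑ j, α j) * Kinf (fun i => α i / ∑ j, α j) μ f)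
  have z_sq : z ^ 2 = 2 * (∑ j, α j) * Kinf (fun i => α i / ∑ j, α j) μ f :=
    sq_sqrt (le_trans (by positivity) sq_div_le)
  have le_z : σ / √(1 + y) ≤ z := by
    refine le_sqrt_of_sq_le ?_
    rwa [div_pow, sq_sqrt (by linarith)]
  have exp_le_prod : exp (-z ^ 2 / 2) ≤ ∏ j, (1 + x j) ^ α j := by
    have prod_eq : ∏ j, (1 + x j) ^ α j = exp (∑ j, α j * log (1 + x j)) := by
      rw [exp_sum]
      refine Finset.prod_congr rfl fun j _ => ?_
      rw [rpow_def_of_pos (by linarith [h.neg_one_lt j]), mul_comm]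
    rw [prod_eq, z_sq]
    gcongr
    linarith [h.neg_sum_mul_log_le_sum_mul_Kinf hα]
  refine (gaussianReal_Ici_le_integral_twoSidedExp hσ₀ hy hyσ le_z).trans ?_
  gcongr
  exact integral_nonneg fun v => twoSidedExp_nonneg y v

lemma IsDualTilt.abs_le_max {ι : Type*} [Fintype ι] {α f x : ι → ℝ} {μ l : ℝ}
    (h : IsDualTilt α f μ l x) {i₀ i₁ : ι} (hf : ∀ i, f i ∈ Icc (f i₀) (f i₁)) (i : ι) :
    |x i| ≤ max |x i₀| |x i₁| :=
  abs_le_max_abs_abs (h.le_of_le (hf i).1) (h.le_of_le (hf i).2)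

lemma mul_max_abs_le {ι : Type*} [Fintype ι] {α x : ι → ℝ} {A ε σ : ℝ} (hα : ∀ j, 0 ≤ α j)
    (hσ₀ : 0 ≤ σ) (hσ : σ ^ 2 = ∑ j, α j * x j ^ 2) (hε : 0 < ε) {i₀ i₁ : ι}
    (hA : A ^ 2 / ε ^ 2 ≤ min (α i₀) (α i₁)) : A * max |x i₀| |x i₁| ≤ ε * σ := by
  have mul_abs_le : ∀ i, A ^ 2 / ε ^ 2 ≤ α i → A * |x i| ≤ ε * σ := by
    intro i hi
    refine le_of_sq_le_sq ?_ (by positivity)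
    calc (A * |x i|) ^ 2 = ε ^ 2 * (A ^ 2 / ε ^ 2 * x i ^ 2) := by
          rw [mul_pow, sq_abs]
          field_simp
      _ ≤ ε ^ 2 * (α i * x i ^ 2) := by gcongr
      _ ≤ ε ^ 2 * σ ^ 2 := by
          rw [hσ]
          gcongr
          exact Finset.single_le_sum (f := fun j => α j * x j ^ 2)
            (fun j _ => mul_nonneg (hα j) (sq_nonneg _)) (Finset.mem_univ i)
      _ = (ε * σ) ^ 2 := by ring
  rcases max_choice |x i₀| |x i₁| with max_eq | max_eq <;> rw [max_eq]
  exacts [mul_abs_le i₀ (hA.trans (min_le_left _ _)), mul_abs_le i₁ (hA.trans (min_le_right _ _))]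

lemma sum_mul_sub_neg {ι : Type*} [Fintype ι] {α f : ι → ℝ} {μ : ℝ} (hα : 0 < ∑ j, α j)
    (hμ : ∑ i, f i * (α i / ∑ j, α j) < μ) : ∑ i, α i * (f i - μ) < 0 := by
  simp only [mul_div_assoc', ← Finset.sum_div, div_lt_iff₀ hα] at hμ
  simp only [mul_comm (α _), sub_mul, Finset.sum_sub_distrib, ← Finset.mul_sum]
  linarith

lemma dirichlet_update_eq_ofReal_prod_mul {m : ℕ} {α f x : Fin (m + 1) → ℝ} {μ l : ℝ}
    (h : IsDualTilt α f μ l x) (hα : ∀ i, 0 < α i) {i₁ : Fin (m + 1)} (hi₁ : μ < f i₁) :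
    dirichlet m (Function.update α i₁ (α i₁ + 1)) {w | μ ≤ ∑ i, f i * w i}
      = ENNReal.ofReal ((∏ j, (1 + x j) ^ α j) *
          ∫ v, twoSidedExp (x i₁) v ∂weightedGammaSum α x) := by
  have := isProbabilityMeasure_weightedGammaSum hα x
  have x_pos := h.pos_of_lt hi₁
  have integrable : Integrable (twoSidedExp (x i₁)) (weightedGammaSum α x) :=
    .of_bound (continuous_twoSidedExp _).aestronglyMeasurable 1 <| ae_of_all _ fun v => by
      rw [norm_of_nonneg (twoSidedExp_nonneg _ v)]
      exact twoSidedExp_le_one x_pos.le v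
  rw [dirichlet_le_sum_eq (update_add_one_pos hα i₁),
    pi_gammaMeasure_update_nonneg_eq_lintegral hα h.neg_one_lt h.multiplier_pos h.multiplier_mul
      x_pos,
    ← ofReal_integral_eq_lintegral_ofReal integrable (ae_of_all _ (twoSidedExp_nonneg _)),
    ENNReal.ofReal_mul]
  exact Finset.prod_nonneg fun j _ => rpow_nonneg (by linarith [h.neg_one_lt j]) _

theorem dirichlet_crossing_lower_general {m : ℕ} {f α : Fin (m + 1) → ℝ} (hα : ∀ i, 0 < α i)
    {i₀ i₁ : Fin (m + 1)} (hf : ∀ i, f i ∈ Icc (f i₀) (f i₁)) {ε : ℝ} (hε : ε ∈ Ioo 0 1)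
    (hmin : 15 ^ 2 / ε ^ 2 ≤ min (α i₀) (α i₁)) {μ : ℝ}
    (hμ : μ ∈ Ioo (∑ i, f i * (α i / ∑ j, α j)) (f i₁)) :
    ENNReal.ofReal (1 - ε) *
        gaussianReal 0 1 {z | √(2 * (∑ j, α j) * Kinf (fun i => α i / ∑ j, α j) μ f) ≤ z}
      ≤ dirichlet m (Function.update α i₁ (α i₁ + 1)) {w | μ ≤ ∑ i, f i * w i} := by
  obtain ⟨l, x, tilt⟩ := exists_isDualTilt hα
    (sum_mul_sub_neg (Finset.sum_pos (fun i _ => hα i) Finset.univ_nonempty) hμ.1) hμ.2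
    fun i => (hf i).2
  have x_pos : 0 < x i₁ := tilt.pos_of_lt hμ.2
  have variance_pos : 0 < ∑ j, α j * x j ^ 2 :=
    Finset.sum_pos' (fun j _ => mul_nonneg (hα j).le (sq_nonneg _))
      ⟨i₁, Finset.mem_univ i₁, mul_pos (hα i₁) (pow_pos x_pos 2)⟩
  obtain ⟨σ, σ_pos, hσ⟩ : ∃ σ, 0 < σ ∧ σ ^ 2 = ∑ j, α j * x j ^ 2 :=
    ⟨_, sqrt_pos.mpr variance_pos, sq_sqrt variance_pos.le⟩
  have radius_le := mul_max_abs_le (fun j => (hα j).le) σ_pos.le hσ hε.1 hmin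
  have x_le_radius : x i₁ ≤ max |x i₀| |x i₁| := (le_abs_self _).trans (le_max_right _ _)
  have prod_nonneg : 0 ≤ ∏ j, (1 + x j) ^ α j :=
    Finset.prod_nonneg fun j _ => rpow_nonneg (by linarith [tilt.neg_one_lt j]) _
  have tail_le := tilt.gaussianReal_Ici_le_prod_mul hα σ_pos hσ x_pos
    (fun i => tilt.le_of_le (hf i).2) (by nlinarith [hε.2])
  refine (mul_le_mul_right tail_le _).trans ?_
  rw [dirichlet_update_eq_ofReal_prod_mul tilt hα hμ.2, ← ENNReal.ofReal_mul (by linarith [hε.2]),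
    mul_left_comm]
  gcongr
  exact one_sub_mul_le_integral_twoSidedExp_weightedGammaSum hα tilt.sum_mul_eq_zero
    (tilt.abs_le_max hf) σ_pos hσ hε.1.le hε.2.le radius_le x_pos x_le_radius

lemma le_c0 : 15 ^ 2 ≤ c0 := by
  have sqrt_six_ge : 2.4 ≤ √6 := le_sqrt_of_sq_le (by norm_num)
  calc (15 : ℝ) ^ 2 ≤ 2 / 3.1416 * (8 + 49 * 2.4 / 9) ^ 2 := by norm_num
    _ ≤ c0 := by
      unfold c0
      gcongr
      exact pi_lt_d4.le

/-- **Lower bound on Dirichlet boundary-crossing probabilities** (Theorem 1, lower bound). -/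
theorem dirichlet_crossing_lower
    (m : ℕ) (hm : 1 ≤ m) (b : ℝ) (hb : 0 < b)
    (f : Fin (m + 1) → ℝ) (hf : ∀ i, f i ∈ Set.Icc (0 : ℝ) b)
    (hf0 : f 0 = 0) (hfm : f (Fin.last m) = b)
    (α : Fin (m + 1) → ℝ) (hα : ∀ i, 0 < α i)
    (ε : ℝ) (hε : ε ∈ Set.Ioo (0 : ℝ) 1)
    (hmin : c0 / ε ^ 2 ≤ min (α 0) (α (Fin.last m)))
    (μ : ℝ) (hμ : μ ∈ Set.Ioo (∑ ℓ, f ℓ * (α ℓ / ∑ j, α j)) b) :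
    ENNReal.ofReal (1 - ε) *
        gaussianReal 0 1
          {x | Real.sqrt (2 * (∑ j, α j) * Kinf (fun ℓ => α ℓ / ∑ j, α j) μ f) ≤ x}
      ≤ dirichlet m (Function.update α (Fin.last m) (α (Fin.last m) + 1))
          {w | μ ≤ ∑ ℓ, f ℓ * w ℓ} :=
  dirichlet_crossing_lower_general hα (by rwa [hf0, hfm]) hε
    ((div_le_div_of_nonneg_right le_c0 (sq_nonneg ε)).trans hmin) (by rwa [hfm])

end
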